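/- arXiv:1606.08621 — 4 statements merged into one kernel-verified Lean document; each statement's English description precedes it below -/
import Mathlib

section
/- Let G be the parallel composition of r ≥ 2 paths of lengths k_1,...,k_r, where the integers k_1,...,k_r all have the same parity, and let X be the projective toric subset parameterized by G. If all k_i are odd, then reg(G) = (⌊k_1/2⌋ + ... + ⌊k_r/2⌋)(q−2); if all k_i are even, then reg(G) = (k_1/2 + ... + k_r/2 − 1)(q−2). -/
open MvPolynomial

/-- A finite multigraph without loops: each edge `e` has two distinct endpoints
`fst e` and `snd e`.  Multiple edges with the same endpoints are allowed. -/
structure Multigraph (V E : Type) : Type where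
  fst : E → V
  snd : E → V
  ne : ∀ e, fst e ≠ snd e

namespace Multigraph

variable {V E : Type}

/-- Vertex `v` is an endpoint of the edge `e`. -/
def Incident (G : Multigraph V E) (v : V) (e : E) : Prop :=
  G.fst e = v ∨ G.snd e = v

instance (G : Multigraph V E) [DecidableEq V] (v : V) : DecidablePred (G.Incident v) :=
  fun e => inferInstanceAs (Decidable (G.fst e = v ∨ G.snd e = v))

/-- The degree of a vertex: the number of edges incident to it. -/
noncomputable def degree (G : Multigraph V E) (v : V) : ℕ :=
  Nat.card {e : E // G.Incident v e}

/-- The graph has no isolated vertices. -/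
def NoIsolated (G : Multigraph V E) : Prop :=
  ∀ v : V, ∃ e : E, G.Incident v e

variable (K : Type) [Field K] [Fintype K]

/-- The point of the affine torus associated with an assignment `x` of nonzero
scalars to the vertices: its coordinate at an edge `e = {v,w}` is `x v * x w`. -/
def point (G : Multigraph V E) (x : V → Kˣ) : E → K :=
  fun e => (x (G.fst e) : K) * (x (G.snd e) : K)

/-- The projective toric subset `X` parameterized by `G`, realized as the set of
`Kˣ`-orbits (i.e. projective points) of the points `G.point K x`, `x : V → Kˣ`. -/
def toricSet (G : Multigraph V E) : Set (Set (E → K)) :=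
  Set.range fun x : V → Kˣ => MulAction.orbit Kˣ (G.point K x)

/-- The vanishing ideal `I(X)` of the projective toric subset parameterized by `G`:
the ideal of all polynomials each of whose homogeneous components vanishes at the
point `G.point K x` for every `x : V → Kˣ`. -/
def vanishingIdeal (G : Multigraph V E) : Ideal (MvPolynomial E K) where
  carrier := {f | ∀ (x : V → Kˣ) (d : ℕ), eval (G.point K x) (homogeneousComponent d f) = 0}
  zero_mem' := by intro x d; simp
  add_mem' := by
    intro a b ha hb x d
    rw [map_add, map_add, ha x d, hb x d, add_zero]
  smul_mem' := by
    intro c f hf x n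
    rw [smul_eq_mul, ← sum_homogeneousComponent f, Finset.mul_sum, map_sum, map_sum]
    refine Finset.sum_eq_zero fun d _ => ?_
    nth_rewrite 1 [← sum_homogeneousComponent c]
    rw [Finset.sum_mul, map_sum, map_sum]
    refine Finset.sum_eq_zero fun e _ => ?_
    have h1 : (homogeneousComponent e c * homogeneousComponent d f).IsHomogeneous (e + d) :=
      (homogeneousComponent_isHomogeneous e c).mul (homogeneousComponent_isHomogeneous d f)
    rw [homogeneousComponent_of_mem ((mem_homogeneousSubmodule _ _).mpr h1)]
    split_ifs
    · rw [map_mul, hf x d, mul_zero]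
    · simp

/-- The Hilbert function of `S/I(X)`: the dimension over `K` of the degree-`d`
homogeneous component of the quotient, realized as the image of the space of
degree-`d` homogeneous polynomials in the quotient. -/
noncomputable def hilbert (G : Multigraph V E) (d : ℕ) : ℕ :=
  Module.finrank K
    ((homogeneousSubmodule E K d).map (Ideal.Quotient.mkₐ K (G.vanishingIdeal K)).toLinearMap)

/-- The regularity `reg G`: the least `d` such that the Hilbert function of `S/I(X)`
at `d` equals the number of points of `X`. -/
noncomputable def reg (G : Multigraph V E) : ℕ :=
  sInf {d : ℕ | G.hilbert K d = (G.toricSet K).ncard}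

/-- The graph obtained from `G` by deleting a vertex `v` and all edges incident
to it. -/
def deleteVert (G : Multigraph V E) (v : V) :
    Multigraph {w : V // w ≠ v} {e : E // ¬ G.Incident v e} where
  fst e := ⟨G.fst e.1, fun h => e.2 (Or.inl h)⟩
  snd e := ⟨G.snd e.1, fun h => e.2 (Or.inr h)⟩
  ne e h := G.ne e.1 (congrArg Subtype.val h)

/-- The graph obtained from `G` by identifying the vertex `v₂` with the vertex `v₁`:
the edges are the same, and every endpoint equal to `v₂` is replaced by `v₁`.
This requires that `{v₁, v₂}` is a non-edge of `G`, so that no loops are created. -/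
def identifyVert [DecidableEq V] (G : Multigraph V E) (v₁ v₂ : V) (h12 : v₁ ≠ v₂)
    (h : ∀ e, ¬ (G.Incident v₁ e ∧ G.Incident v₂ e)) :
    Multigraph {w : V // w ≠ v₂} E where
  fst e := ⟨if G.fst e = v₂ then v₁ else G.fst e, by split_ifs with hh; exacts [h12, hh]⟩
  snd e := ⟨if G.snd e = v₂ then v₁ else G.snd e, by split_ifs with hh; exacts [h12, hh]⟩
  ne := by
    intro e heq
    rw [Subtype.ext_iff] at heq
    simp only at heq
    split_ifs at heq with h1 h2 h2
    · exact G.ne e (h1.trans h2.symm)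
    · exact h e ⟨Or.inr heq.symm, Or.inl h1⟩
    · exact h e ⟨Or.inl heq, Or.inr h2⟩
    · exact G.ne e heq

/-- The subgraph of `G` determined by a set `A` of edges of `G`, together with all
endpoints of those edges (so it has no isolated vertices). -/
def subgraph [DecidableEq V] (G : Multigraph V E) (A : Finset E) :
    Multigraph {v : V // ∃ e ∈ A, G.Incident v e} {e : E // e ∈ A} where
  fst e := ⟨G.fst e.1, e.1, e.2, Or.inl rfl⟩
  snd e := ⟨G.snd e.1, e.1, e.2, Or.inr rfl⟩
  ne e h := G.ne e.1 (congrArg Subtype.val h)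

end Multigraph

/-- The vertex of the parallel composition of paths of lengths `k i` lying on the
`i`-th path at distance `j` from the common initial vertex:  `j = 0` gives the common
initial vertex, `j = k i` the common terminal vertex, and `0 < j < k i` gives the
`j`-th interior vertex of the `i`-th path. -/
def pcVert {ι : Type} (k : ι → ℕ) (i : ι) (j : ℕ) :
    Bool ⊕ ((i : ι) × Fin (k i - 1)) :=
  if h0 : j = 0 then Sum.inl false
  else if h : j < k i then Sum.inr ⟨i, ⟨j - 1, by omega⟩⟩
  else Sum.inl true

/-- The parallel composition of the family of paths `P i` of lengths `k i` (`i : ι`):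
the `i`-th path has `k i` edges indexed by `Fin (k i)`, its `j`-th edge joining the
vertices of the `i`-th path at distances `j` and `j + 1` from the common initial
vertex.  All the initial vertices of the paths are identified to a single vertex and
all the terminal vertices are identified to a single vertex. -/
def parallelComp {ι : Type} (k : ι → ℕ) :
    Multigraph (Bool ⊕ ((i : ι) × Fin (k i - 1))) ((i : ι) × Fin (k i)) where
  fst e := pcVert k e.1 e.2.1
  snd e := pcVert k e.1 (e.2.1 + 1)
  ne := by
    rintro ⟨i, j⟩ h
    have hj := j.2
    simp only [pcVert] at h
    split_ifs at h <;> simp_all <;> omega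

/-- The monomial `f i`: the product of the edges of the `i`-th path of the parallel
composition in odd positions (positions `1, 3, 5, ...`, i.e. indices `0, 2, 4, ...`). -/
noncomputable def oddProd {ι : Type} (K : Type) [Field K] (k : ι → ℕ) (i : ι) :
    MvPolynomial ((i : ι) × Fin (k i)) K :=
  ∏ m : Fin ((k i + 1) / 2), X ⟨i, ⟨2 * m.1, by have := m.2; omega⟩⟩

/-- The monomial `g i`: the product of the edges of the `i`-th path of the parallel
composition in even positions (positions `2, 4, 6, ...`, i.e. indices `1, 3, 5, ...`). -/
noncomputable def evenProd {ι : Type} (K : Type) [Field K] (k : ι → ℕ) (i : ι) :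
    MvPolynomial ((i : ι) × Fin (k i)) K :=
  ∏ m : Fin (k i / 2), X ⟨i, ⟨2 * m.1 + 1, by have := m.2; omega⟩⟩

/-!
Let `n = q - 1` be the order of `Kˣ`. Distinct characters of the torus `(Kˣ)^V` are linearly
independent, so the Hilbert function in degree `d` counts the characters induced by monomials of
degree `d`, and `|X|` is the number of characters induced by Laurent monomials of degree `0`.
Taking discrete logarithms, `HF(d) = |X|` says that every class of exponent vectors modulo `n`, of
degree `d` modulo `n`, has a nonnegative representative of degree exactly `d`; hence the regularity
is the maximum over all classes of the least degree of a representative, minus `n - 1`.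

Lower bound: on an independent set `S` of vertices there is a class forcing the weighted degree at
every vertex of `S` to be `-1` modulo `n`, so its representatives have degree at least
`|S| (n - 1)`. In a parallel composition we take the vertices at odd distance from the initial
vertex.

Upper bound: when all lengths have the same parity, an exponent vector on the parallel composition
may be twisted by `c i, -c i, c i, …` along the `i`-th path for any `c` with `∑ i, c i = 0`. An
averaging argument provides a small twist on each path separately, and the constraint on the sum
is met by averaging over the joint twists of two of the paths.
-/

/-! ### Characters of the torus and the Hilbert function -/

theorem finrank_map_eq_of_apply_eq_zero_iff {R M N P : Type*} [Ring R] [AddCommGroup M]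
    [AddCommGroup N] [AddCommGroup P] [Module R M] [Module R N] [Module R P] (p : Submodule R M)
    (f : M →ₗ[R] N) (g : M →ₗ[R] P) (h : ∀ x ∈ p, f x = 0 ↔ g x = 0) :
    Module.finrank R (p.map f) = Module.finrank R (p.map g) := by
  have hker : LinearMap.ker (f.domRestrict p) = LinearMap.ker (g.domRestrict p) := by
    ext x
    exact h x x.2
  rw [← LinearMap.range_domRestrict, ← LinearMap.range_domRestrict]
  exact (((f.domRestrict p).quotKerEquivRange.symm.trans (Submodule.quotEquivOfEq _ _ hker)).trans
    (g.domRestrict p).quotKerEquivRange).finrank_eq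

theorem homogeneousSubmodule_eq_span_monomial {σ : Type*} [Fintype σ] (R : Type*) [CommSemiring R]
    (d : ℕ) :
    homogeneousSubmodule σ R d =
      Submodule.span R ((fun m => monomial m 1) '' {m : σ →₀ ℕ | ∑ i, m i = d}) := by
  rw [homogeneousSubmodule_eq_finsupp_supported, AddMonoidAlgebra.supported_eq_span_single]
  simp only [Finsupp.degree_eq_sum, single_eq_monomial]

theorem linearIndependent_coe_monoidHom_units (M L : Type*) [Monoid M] [Field L] :
    LinearIndependent L fun (χ : M →* Lˣ) (x : M) => (χ x : L) :=
  (linearIndependent_monoidHom M L).comp (fun χ : M →* Lˣ => (Units.coeHom L).comp χ)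
    fun _ _ h => MonoidHom.ext fun x => Units.ext (DFunLike.congr_fun h x)

theorem prod_zpow_eq_zpow_sum {ι α : Type*} [CommGroup α] (s : Finset ι) (f : ι → ℤ) (a : α) :
    ∏ i ∈ s, a ^ f i = a ^ ∑ i ∈ s, f i :=
  (map_sum (zmultiplesHom (Additive α) (Additive.ofMul a)) f s).symm

theorem hasEnoughRootsOfUnity_exponent_pi_units (V K : Type*) [Field K] [Finite K] :
    HasEnoughRootsOfUnity K (Monoid.exponent (V → Kˣ)) := by
  have : HasEnoughRootsOfUnity K (Nat.card Kˣ) := by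
    refine HasEnoughRootsOfUnity.of_card_le ?_
    have h : rootsOfUnity (Nat.card Kˣ) K = ⊤ := by
      ext u
      simp [mem_rootsOfUnity]
    rw [h, Subgroup.card_top]
  exact this.of_dvd K (Monoid.exponent_dvd_of_forall_pow_eq_one fun x =>
    funext fun v => pow_card_eq_one')

namespace Multigraph

section Characters

variable {V E : Type} (G : Multigraph V E) (K : Type) [Field K]

/-- The character `x ↦ x v * x w` of the torus `(Kˣ)^V` attached to an edge `e = {v, w}`: the
coordinate at `e` of the parameterization of the toric set. -/
def edgeChar (e : E) : (V → Kˣ) →* Kˣ :=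
  Pi.evalMonoidHom (fun _ => Kˣ) (G.fst e) * Pi.evalMonoidHom (fun _ => Kˣ) (G.snd e)

theorem edgeChar_apply (e : E) (x : V → Kˣ) :
    G.edgeChar K e x = x (G.fst e) * x (G.snd e) := rfl

theorem point_eq_edgeChar (x : V → Kˣ) (e : E) : G.point K x e = (G.edgeChar K e x : K) := rfl

theorem orbit_point_eq_iff (x y : V → Kˣ) :
    MulAction.orbit Kˣ (G.point K x) = MulAction.orbit Kˣ (G.point K y) ↔
      ∃ u : Kˣ, ∀ e, G.edgeChar K e (x⁻¹ * y) = u := by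
  rw [eq_comm, MulAction.orbit_eq_iff]
  refine exists_congr fun u => ?_
  rw [funext_iff]
  refine forall_congr' fun e => ?_
  change (u • G.point K x) e = G.point K y e ↔ _
  rw [map_mul, map_inv, inv_mul_eq_iff_eq_mul, Pi.smul_apply, point_eq_edgeChar,
    point_eq_edgeChar, Units.smul_def, smul_eq_mul, ← Units.val_mul, Units.val_inj, eq_comm,
    mul_comm u]

/-- Evaluation of polynomials in the edge variables along the parameterization of the affine cone
over the toric set. -/
noncomputable def evalTorus : MvPolynomial E K →ₗ[K] ((V → Kˣ) → K) :=
  LinearMap.pi fun x => (aeval (G.point K x)).toLinearMap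

theorem evalTorus_apply (f : MvPolynomial E K) (x : V → Kˣ) :
    G.evalTorus K f x = eval (G.point K x) f := by
  simp [evalTorus, aeval_eq_eval]

theorem mem_vanishingIdeal_iff_of_isHomogeneous {d : ℕ} {f : MvPolynomial E K}
    (hf : f.IsHomogeneous d) : f ∈ G.vanishingIdeal K ↔ G.evalTorus K f = 0 := by
  constructor
  · intro h
    funext x
    have := h x d
    rwa [homogeneousComponent_of_mem hf, if_pos rfl, ← evalTorus_apply] at this
  · intro h x d'
    rw [homogeneousComponent_of_mem hf]
    split_ifs
    · rw [← evalTorus_apply, h, Pi.zero_apply]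
    · exact map_zero _

theorem hilbert_eq_finrank_map_evalTorus (d : ℕ) :
    G.hilbert K d = Module.finrank K ((homogeneousSubmodule E K d).map (G.evalTorus K)) :=
  finrank_map_eq_of_apply_eq_zero_iff _ _ _ fun _ hf =>
    Ideal.Quotient.eq_zero_iff_mem.trans (G.mem_vanishingIdeal_iff_of_isHomogeneous K hf)

variable [Fintype E]

/-- The character of the torus `(Kˣ)^V` induced by the Laurent monomial with exponents `a` in the
edge variables. -/
def monomialChar (a : E → ℤ) : (V → Kˣ) →* Kˣ where
  toFun x := ∏ e, G.edgeChar K e x ^ a e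
  map_one' := by simp
  map_mul' x y := by simp [mul_zpow, Finset.prod_mul_distrib]

theorem monomialChar_apply (a : E → ℤ) (x : V → Kˣ) :
    G.monomialChar K a x = ∏ e, G.edgeChar K e x ^ a e := rfl

theorem monomialChar_zero : G.monomialChar K 0 = 1 := by
  ext x
  simp [monomialChar_apply]

theorem monomialChar_add (a b : E → ℤ) :
    G.monomialChar K (a + b) = G.monomialChar K a * G.monomialChar K b := by
  ext x
  simp [monomialChar_apply, zpow_add, Finset.prod_mul_distrib]

theorem monomialChar_neg (a : E → ℤ) : G.monomialChar K (-a) = (G.monomialChar K a)⁻¹ := by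
  ext x
  simp [monomialChar_apply]

theorem monomialChar_single_apply [DecidableEq E] (e : E) (m : ℤ) (x : V → Kˣ) :
    G.monomialChar K (Pi.single e m) x = G.edgeChar K e x ^ m := by
  rw [monomialChar_apply, Fintype.prod_eq_single e fun f hf => by simp [hf], Pi.single_eq_same]

theorem eval_point_monomial (m : E →₀ ℕ) (x : V → Kˣ) :
    eval (G.point K x) (monomial m 1) = (G.monomialChar K (fun e => m e) x : K) := by
  simp [monomialChar_apply, eval_monomial, Finsupp.prod_fintype, point_eq_edgeChar]

/-- The characters of the torus induced by the monomials of degree `d`. -/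
def monomialChars (d : ℕ) : Set ((V → Kˣ) →* Kˣ) :=
  (fun b : E → ℕ => G.monomialChar K fun e => b e) '' {b | ∑ e, b e = d}

/-- The characters of the torus induced by the Laurent monomials whose degree is congruent to `d`
modulo the order of `Kˣ`. -/
def laurentChars (d : ZMod (Nat.card Kˣ)) : Set ((V → Kˣ) →* Kˣ) :=
  G.monomialChar K '' {a | ((∑ e, a e : ℤ) : ZMod (Nat.card Kˣ)) = d}

theorem monomialChars_subset_laurentChars (d : ℕ) :
    G.monomialChars K d ⊆ G.laurentChars K d := by
  rintro _ ⟨b, rfl, rfl⟩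
  exact ⟨_, by simp, rfl⟩

theorem ncard_laurentChars [Nonempty E] (d : ZMod (Nat.card Kˣ)) :
    (G.laurentChars K d).ncard = (G.laurentChars K 0).ncard := by
  classical
  obtain ⟨e₀⟩ := ‹Nonempty E›
  obtain ⟨m, rfl⟩ := ZMod.intCast_surjective d
  have htranslate : G.laurentChars K m =
      (· * G.monomialChar K (Pi.single e₀ m)) '' G.laurentChars K 0 := by
    ext χ
    constructor
    · rintro ⟨a, ha, rfl⟩
      refine ⟨_, ⟨a - Pi.single e₀ m, ?_, rfl⟩, ?_⟩
      · simpa [-Int.cast_sum, sub_eq_zero] using ha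
      · simp only [← monomialChar_add, sub_add_cancel]
    · rintro ⟨_, ⟨a, ha, rfl⟩, rfl⟩
      refine ⟨a + Pi.single e₀ m, ?_, G.monomialChar_add K a (Pi.single e₀ m)⟩
      simpa [-Int.cast_sum, Finset.sum_add_distrib] using ha
  rw [htranslate]
  exact Set.ncard_image_of_injective _ (mul_left_injective _)

/-- `laurentChars 0` as a subgroup of the character group of the torus. -/
def degreeZeroChars : Subgroup ((V → Kˣ) →* Kˣ) where
  carrier := G.laurentChars K 0
  one_mem' := ⟨0, by simp, G.monomialChar_zero K⟩
  mul_mem' := by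
    rintro _ _ ⟨a, ha, rfl⟩ ⟨b, hb, rfl⟩
    refine ⟨a + b, ?_, G.monomialChar_add K a b⟩
    simp_all [Finset.sum_add_distrib]
  inv_mem' := by
    rintro _ ⟨a, ha, rfl⟩
    refine ⟨-a, ?_, G.monomialChar_neg K a⟩
    simp_all

theorem forall_degreeZeroChars_apply_eq_one_iff [Finite K] [Nonempty E] (z : V → Kˣ) :
    (∀ χ ∈ G.degreeZeroChars K, χ z = 1) ↔ ∃ u : Kˣ, ∀ e, G.edgeChar K e z = u := by
  classical
  constructor
  · intro h
    obtain ⟨e₀⟩ := ‹Nonempty E›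
    refine ⟨G.edgeChar K e₀ z, fun e => ?_⟩
    have hquot := h _ ⟨Pi.single e 1 + Pi.single e₀ (-1), by
      simp [-Int.cast_sum, Finset.sum_add_distrib], rfl⟩
    rwa [monomialChar_add, MonoidHom.mul_apply, monomialChar_single_apply,
      monomialChar_single_apply, zpow_one, zpow_neg_one, mul_inv_eq_one] at hquot
  · rintro ⟨u, hu⟩ _ ⟨a, ha, rfl⟩
    rw [Set.mem_ofPred_eq, ZMod.intCast_zmod_eq_zero_iff_dvd] at ha
    rw [monomialChar_apply]
    simp only [hu]
    rw [prod_zpow_eq_zpow_sum]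
    exact orderOf_dvd_iff_zpow_eq_one.mp
      ((Int.natCast_dvd_natCast.mpr (orderOf_dvd_natCard u)).trans ha)

/- The fibres of the parameterization of the toric set are the cosets of the annihilator of
`degreeZeroChars`, so the count follows from the duality of finite abelian groups. -/
theorem ncard_toricSet [Finite V] [Finite K] [Nonempty E] :
    (G.toricSet K).ncard = (G.laurentChars K 0).ncard := by
  have := hasEnoughRootsOfUnity_exponent_pi_units V K
  set H : Subgroup (V → Kˣ) := (CommGroup.subgroupOrderIsoSubgroupMonoidHom (V → Kˣ) K).symm
    (OrderDual.toDual (G.degreeZeroChars K)) with hH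
  have hfibers : ∀ x y, MulAction.orbit Kˣ (G.point K x) = MulAction.orbit Kˣ (G.point K y) ↔
      x⁻¹ * y ∈ H := fun x y => by
    rw [orbit_point_eq_iff, ← forall_degreeZeroChars_apply_eq_one_iff, hH]
    exact (CommGroup.mem_subgroupOrderIsoSubgroupMonoidHom_symm_iff K (G.degreeZeroChars K) _).symm
  calc (G.toricSet K).ncard
      = Nat.card ((V → Kˣ) ⧸ H) := Nat.card_congr <|
        (Setoid.quotientKerEquivRange _).symm.trans <| Quotient.congrRight fun x y =>
          (hfibers x y).trans QuotientGroup.leftRel_apply.symm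
    _ = Nat.card (G.degreeZeroChars K) := by
        rw [← CommGroup.card_subgroupOrderIsoSubgroupMonoidHom K H, hH, OrderIso.apply_symm_apply]
        rfl
    _ = (G.laurentChars K 0).ncard := rfl

theorem map_evalTorus_homogeneousSubmodule (d : ℕ) :
    (homogeneousSubmodule E K d).map (G.evalTorus K) =
      Submodule.span K ((fun (χ : (V → Kˣ) →* Kˣ) x => (χ x : K)) '' G.monomialChars K d) := by
  rw [homogeneousSubmodule_eq_span_monomial, Submodule.map_span, monomialChars, Set.image_image,
    Set.image_image]
  congr 1
  ext f
  simp only [Set.mem_image, Set.mem_ofPred_eq, funext_iff, evalTorus_apply, eval_point_monomial]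
  exact Finsupp.equivFunOnFinite.exists_congr_left

theorem hilbert_eq_ncard_monomialChars [Finite V] [Finite K] (d : ℕ) :
    G.hilbert K d = (G.monomialChars K d).ncard := by
  have := Fintype.ofFinite (G.monomialChars K d)
  rw [hilbert_eq_finrank_map_evalTorus, map_evalTorus_homogeneousSubmodule, Set.image_eq_range]
  exact (finrank_span_eq_card ((linearIndependent_coe_monoidHom_units (V → Kˣ) K).comp _
    Subtype.val_injective)).trans Nat.card_eq_fintype_card.symm

theorem hilbert_eq_ncard_toricSet_iff_subset [Finite V] [Finite K] [Nonempty E] (d : ℕ) :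
    G.hilbert K d = (G.toricSet K).ncard ↔ G.laurentChars K d ⊆ G.monomialChars K d := by
  rw [hilbert_eq_ncard_monomialChars, ncard_toricSet, ← ncard_laurentChars G K d]
  have hsub := G.monomialChars_subset_laurentChars K d
  exact ⟨fun h => (Set.eq_of_subset_of_ncard_le hsub h.ge).ge, fun h => by rw [hsub.antisymm h]⟩

end Characters

/-! ### Exponent relations and the regularity -/

section ExponentRelations

variable {V E : Type} (G : Multigraph V E)

/-- No edge of the graph joins two vertices of `S`. -/
def IsIndependent (S : Finset V) : Prop :=
  ∀ e, ¬(G.fst e ∈ S ∧ G.snd e ∈ S)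

/-- The sums of a vertex labelling along the edges: the additive form of `point`. -/
def edgeSum {R : Type*} [Add R] (y : V → R) (e : E) : R :=
  y (G.fst e) + y (G.snd e)

theorem sum_edgeSum_single_le_one [DecidableEq V] {S : Finset V}
    (hS : G.IsIndependent S) (e : E) :
    ∑ v ∈ S, G.edgeSum (Pi.single v 1 : V → ℕ) e ≤ 1 := by
  have he := hS e
  simp only [edgeSum, Finset.sum_add_distrib, Finset.sum_pi_single]
  grind

theorem edgeSum_single_of_incident [DecidableEq V] {R : Type*} [NonAssocSemiring R] {S : Finset V}
    (hS : G.IsIndependent S) {v w : V} (hv : v ∈ S) (hw : w ∈ S) {e : E} (hwe : G.Incident w e) :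
    G.edgeSum (Pi.single v 1 : V → R) e = if w = v then 1 else 0 := by
  have he := hS e
  have hloop := G.ne e
  simp only [Incident, edgeSum, Pi.single_apply] at *
  grind

variable [Fintype E]

theorem exists_sum_mul_edgeSum_single_eq_neg_one [DecidableEq V] {R : Type*} [CommRing R]
    (hG : G.NoIsolated) {S : Finset V} (hS : G.IsIndependent S) :
    ∃ a : E → R, ∀ v ∈ S, ∑ e, a e * G.edgeSum (Pi.single v 1) e = -1 := by
  classical
  choose edge hedge using hG
  refine ⟨fun e => -∑ w ∈ S, if edge w = e then 1 else 0, fun v hv => ?_⟩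
  calc ∑ e, (-∑ w ∈ S, if edge w = e then (1 : R) else 0) * G.edgeSum (Pi.single v 1) e
      = -∑ w ∈ S, G.edgeSum (Pi.single v 1) (edge w) := by
        simp only [neg_mul, Finset.sum_neg_distrib, Finset.sum_mul, ite_mul, one_mul, zero_mul]
        rw [Finset.sum_comm]
        simp only [Finset.sum_ite_eq, Finset.mem_univ, if_true]
    _ = -∑ w ∈ S, if w = v then (1 : R) else 0 := by
        rw [Finset.sum_congr rfl fun w hw =>
          G.edgeSum_single_of_incident hS hv hw (hedge w)]
    _ = -1 := by rw [Finset.sum_ite_eq' S v, if_pos hv]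

/-- The exponent vectors of degree `0` that are orthogonal to all edge sums. For
`R = ZMod (Nat.card Kˣ)` these are, after taking discrete logarithms, the exponents of the Laurent
monomials of degree `0` that are identically `1` on the toric set. -/
def exponentRelations (R : Type*) [CommRing R] : Submodule R (E → R) where
  carrier := {c | ∑ e, c e = 0 ∧ ∀ y : V → R, ∑ e, c e * G.edgeSum y e = 0}
  zero_mem' := by simp
  add_mem' := by
    rintro a b ⟨ha, ha'⟩ ⟨hb, hb'⟩
    simp_all [Finset.sum_add_distrib, add_mul]
  smul_mem' := by
    rintro r a ⟨ha, ha'⟩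
    simp_all [← Finset.mul_sum, mul_assoc]

theorem mem_exponentRelations {R : Type*} [CommRing R] {c : E → R} :
    c ∈ G.exponentRelations R ↔ ∑ e, c e = 0 ∧ ∀ y : V → R, ∑ e, c e * G.edgeSum y e = 0 :=
  Iff.rfl

/-- The nonnegative exponent vector `b` lies in the class of `a` modulo `n` and modulo the exponent
relations of the graph. -/
def Represents {n : ℕ} (b : E → ℕ) (a : E → ZMod n) : Prop :=
  (fun e => (b e : ZMod n)) - a ∈ G.exponentRelations (ZMod n)

theorem represents_iff {n : ℕ} {b : E → ℕ} {a : E → ZMod n} :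
    G.Represents b a ↔ ∑ e, (b e : ZMod n) = ∑ e, a e ∧
      ∀ y : V → ZMod n, ∑ e, (b e : ZMod n) * G.edgeSum y e = ∑ e, a e * G.edgeSum y e := by
  simp [Represents, mem_exponentRelations, sub_mul, sub_eq_zero]

theorem represents_val_add {n : ℕ} [NeZero n] (a : E → ZMod n) {c : E → ZMod n}
    (hc : c ∈ G.exponentRelations (ZMod n)) : G.Represents (fun e => (a e + c e).val) a := by
  simpa [Represents, funext_iff, ← Pi.add_def] using hc

variable {G} in
theorem Represents.add_single [DecidableEq E] {n : ℕ} {b : E → ℕ} {a : E → ZMod n}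
    (h : G.Represents b a) (e : E) (m : ℕ) :
    G.Represents (b + Pi.single e m) (a + Pi.single e (m : ZMod n)) := by
  have hcast : (fun f => ((b + Pi.single e m : E → ℕ) f : ZMod n)) =
      (fun f => (b f : ZMod n)) + Pi.single e (m : ZMod n) := by
    ext f
    simp [Pi.single_apply]
  rwa [Represents, hcast, add_sub_add_right_eq_sub]

theorem exists_forall_represents_card_mul_le {n : ℕ} (hG : G.NoIsolated) {S : Finset V}
    (hS : G.IsIndependent S) :
    ∃ a : E → ZMod n, ∀ b, G.Represents b a → S.card * (n - 1) ≤ ∑ e, b e := by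
  classical
  obtain ⟨a, ha⟩ := G.exists_sum_mul_edgeSum_single_eq_neg_one (R := ZMod n) hG hS
  refine ⟨a, fun b hb => ?_⟩
  have hdeg : ∀ v ∈ S, n - 1 ≤ ∑ e, b e * G.edgeSum (Pi.single v 1 : V → ℕ) e := by
    intro v hv
    have hcast : ((∑ e, b e * G.edgeSum (Pi.single v 1 : V → ℕ) e : ℕ) : ZMod n) = -1 := by
      rw [← ha v hv, ← (G.represents_iff.1 hb).2]
      simp [edgeSum, Pi.single_apply]
    rw [← add_eq_zero_iff_eq_neg, ← Nat.cast_add_one, ZMod.natCast_eq_zero_iff] at hcast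
    exact Nat.sub_le_of_le_add (Nat.le_of_dvd (Nat.succ_pos _) hcast)
  calc S.card * (n - 1) = ∑ v ∈ S, (n - 1) := by simp
    _ ≤ ∑ v ∈ S, ∑ e, b e * G.edgeSum (Pi.single v 1 : V → ℕ) e := Finset.sum_le_sum hdeg
    _ = ∑ e, b e * ∑ v ∈ S, G.edgeSum (Pi.single v 1 : V → ℕ) e := by
        simp only [Finset.mul_sum]
        exact Finset.sum_comm
    _ ≤ ∑ e, b e := Finset.sum_le_sum fun e _ =>
        mul_le_of_le_one_right (Nat.zero_le _) (G.sum_edgeSum_single_le_one hS e)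

variable {K : Type} [Field K] [Finite K]

theorem monomialChar_eq_iff (a b : E → ℤ) :
    G.monomialChar K a = G.monomialChar K b ↔ ∀ y : V → ZMod (Nat.card Kˣ),
      ∑ e, (a e : ZMod (Nat.card Kˣ)) * G.edgeSum y e =
        ∑ e, (b e : ZMod (Nat.card Kˣ)) * G.edgeSum y e := by
  let φ : Multiplicative (ZMod (Nat.card Kˣ)) ≃* Kˣ := zmodCyclicMulEquiv inferInstance
  have hlog : ∀ (c : E → ℤ) (y : V → ZMod (Nat.card Kˣ)),
      G.monomialChar K c (fun v => φ (Multiplicative.ofAdd (y v))) =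
        φ (Multiplicative.ofAdd (∑ e, (c e : ZMod (Nat.card Kˣ)) * G.edgeSum y e)) := by
    intro c y
    rw [monomialChar_apply, ofAdd_sum, map_prod]
    refine Finset.prod_congr rfl fun e _ => ?_
    rw [edgeChar_apply, edgeSum, ← map_mul, ← map_zpow, ← ofAdd_add, ← ofAdd_zsmul, zsmul_eq_mul]
  constructor
  · intro h y
    exact Multiplicative.ofAdd.injective (φ.injective (by rw [← hlog, ← hlog, h]))
  · intro h
    refine MonoidHom.ext fun x => ?_
    obtain ⟨y, rfl⟩ : ∃ y : V → ZMod (Nat.card Kˣ), x = fun v => φ (Multiplicative.ofAdd (y v)) :=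
      ⟨fun v => (φ.symm (x v)).toAdd, by simp⟩
    rw [hlog, hlog, h]

end ExponentRelations

section Regularity

variable {V E : Type} [Finite V] [Nonempty E] (G : Multigraph V E) {K : Type} [Field K] [Finite K]

theorem hilbert_eq_ncard_toricSet_iff [Fintype E] (d : ℕ) :
    G.hilbert K d = (G.toricSet K).ncard ↔
      ∀ a : E → ZMod (Nat.card Kˣ), ∑ e, a e = d → ∃ b : E → ℕ,
        ∑ e, b e = d ∧ G.Represents b a := by
  rw [hilbert_eq_ncard_toricSet_iff_subset]
  constructor
  · intro hsub a ha
    obtain ⟨a, rfl⟩ : ∃ a' : E → ℤ, (fun e => (a' e : ZMod (Nat.card Kˣ))) = a :=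
      ZMod.intCast_surjective.comp_left a
    rw [← Int.cast_sum] at ha
    obtain ⟨b, hb, hab⟩ := hsub ⟨a, ha, rfl⟩
    refine ⟨b, hb, G.represents_iff.2 ⟨?_, by simpa using (G.monomialChar_eq_iff _ _).1 hab⟩⟩
    rw [← Nat.cast_sum, hb, ← Int.cast_sum, ha]
  · rintro h _ ⟨a, ha, rfl⟩
    obtain ⟨b, hb, hab⟩ := h (fun e => a e) ((Int.cast_sum _ _).symm.trans ha)
    exact ⟨b, hb, (G.monomialChar_eq_iff _ _).2 (by simpa using (G.represents_iff.1 hab).2)⟩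

theorem hilbert_eq_ncard_toricSet_of_forall_exists_le [Fintype E] {D : ℕ}
    (h : ∀ a : E → ZMod (Nat.card Kˣ), ∃ b : E → ℕ,
      G.Represents b a ∧ ∑ e, b e ≤ D + (Nat.card Kˣ - 1)) :
    G.hilbert K D = (G.toricSet K).ncard := by
  classical
  rw [hilbert_eq_ncard_toricSet_iff]
  intro a ha
  obtain ⟨e₀⟩ := ‹Nonempty E›
  obtain ⟨b, hb, hbD⟩ := h a
  have hdeg : ((∑ e, b e : ℕ) : ZMod (Nat.card Kˣ)) = D := by
    rw [← ha, Nat.cast_sum, (G.represents_iff.1 hb).1]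
  have hle : ∑ e, b e ≤ D := by
    have := NeZero.pos (Nat.card Kˣ)
    exact ((ZMod.natCast_eq_natCast_iff _ _ _).1 hdeg).le_of_lt_add (by lia)
  refine ⟨b + Pi.single e₀ (D - ∑ e, b e), ?_, ?_⟩
  · simp [Finset.sum_add_distrib, hle]
  · simpa [Nat.cast_sub hle, hdeg, -Nat.cast_sum] using hb.add_single e₀ (D - ∑ e, b e)

theorem exists_hilbert_eq_ncard_toricSet [Finite E] :
    ∃ d, G.hilbert K d = (G.toricSet K).ncard := by
  have := Fintype.ofFinite E
  refine ⟨Fintype.card E * Nat.card Kˣ,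
    G.hilbert_eq_ncard_toricSet_of_forall_exists_le fun a =>
      ⟨_, G.represents_val_add a (zero_mem _), ?_⟩⟩
  calc ∑ e, (a e + 0).val ≤ ∑ _e : E, Nat.card Kˣ := Finset.sum_le_sum fun e _ => (ZMod.val_lt _).le
    _ ≤ _ := by simp

theorem hilbert_eq_ncard_toricSet_of_reg_le [Finite E] {d : ℕ} (hd : G.reg K ≤ d) :
    G.hilbert K d = (G.toricSet K).ncard := by
  classical
  have := Fintype.ofFinite E
  induction d, hd using Nat.le_induction with
  | base => exact Nat.sInf_mem G.exists_hilbert_eq_ncard_toricSet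
  | succ d _ ih =>
    rw [hilbert_eq_ncard_toricSet_iff] at ih ⊢
    intro a ha
    obtain ⟨e₀⟩ := ‹Nonempty E›
    obtain ⟨b, hb, hba⟩ := ih (a - Pi.single e₀ 1) (by simp [ha])
    exact ⟨b + Pi.single e₀ 1, by simp [Finset.sum_add_distrib, hb],
      by simpa using hba.add_single e₀ 1⟩

theorem reg_le [Fintype E] {D : ℕ}
    (h : ∀ a : E → ZMod (Nat.card Kˣ), ∃ b : E → ℕ,
      G.Represents b a ∧ ∑ e, b e ≤ D + (Nat.card Kˣ - 1)) :
    G.reg K ≤ D :=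
  Nat.sInf_le (G.hilbert_eq_ncard_toricSet_of_forall_exists_le h)

theorem le_reg [Fintype E] {D : ℕ} (a : E → ZMod (Nat.card Kˣ))
    (h : ∀ b : E → ℕ, G.Represents b a → D + (Nat.card Kˣ - 1) ≤ ∑ e, b e) :
    D ≤ G.reg K := by
  set d := G.reg K + (∑ e, a e - G.reg K).val with hd
  obtain ⟨b, hb, hba⟩ := (G.hilbert_eq_ncard_toricSet_iff d).1
    (G.hilbert_eq_ncard_toricSet_of_reg_le (Nat.le_add_right _ _)) a (by simp [hd])
  have hDb := h b hba
  have hlt := ZMod.val_lt (∑ e, a e - (G.reg K : ZMod (Nat.card Kˣ)))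
  lia

theorem card_sub_one_mul_le_reg [Finite E] (hG : G.NoIsolated) {S : Finset V}
    (hS : G.IsIndependent S) : (S.card - 1) * (Nat.card Kˣ - 1) ≤ G.reg K := by
  have := Fintype.ofFinite E
  obtain rfl | hne := S.eq_empty_or_nonempty
  · simp
  obtain ⟨a, ha⟩ := G.exists_forall_represents_card_mul_le hG hS
  refine G.le_reg a fun b hb => ?_
  rw [← Nat.succ_mul, Nat.succ_eq_add_one, Nat.sub_add_cancel hne.card_pos]
  exact ha b hb

end Regularity

end Multigraph

/-! ### Averaging over residues -/

section Averaging

theorem exists_add_sub_le {A : Type*} [AddCommGroup A] [Fintype A] (F F' : A → ℕ) (t : A) {m : ℕ}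
    (h : ∑ c, F c + ∑ c, F' c ≤ Fintype.card A * m) : ∃ c, F c + F' (t - c) ≤ m := by
  have hreflect : ∑ c, F' (t - c) = ∑ c, F' c := Equiv.sum_comp (Equiv.subLeft t) F'
  rw [← hreflect, ← Finset.sum_add_distrib] at h
  obtain ⟨c, -, hc⟩ := Finset.exists_le_of_sum_le Finset.univ_nonempty
    (h.trans_eq (Finset.sum_const m).symm)
  exact ⟨c, hc⟩

theorem sum_eq_add_add_sum_erase_erase {ι B : Type*} [Fintype ι] [DecidableEq ι] [AddCommMonoid B]
    {i₀ i₁ : ι} (hne : i₁ ≠ i₀) (f : ι → B) :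
    ∑ i, f i = f i₀ + (f i₁ + ∑ i ∈ (Finset.univ.erase i₀).erase i₁, f i) := by
  rw [Finset.add_sum_erase _ _ (Finset.mem_erase.2 ⟨hne, Finset.mem_univ _⟩),
    Finset.add_sum_erase _ _ (Finset.mem_univ _)]

theorem exists_sum_eq_sum_le {ι A : Type*} [Fintype ι] [AddCommGroup A] {F : ι → A → ℕ}
    {m : ι → ℕ} {M : ℕ} {i₀ i₁ : ι} (hne : i₁ ≠ i₀) (hF : ∀ i, ∃ c, F i c ≤ m i)
    (hpair : ∀ t, ∃ c, F i₀ c + F i₁ (t - c) ≤ m i₀ + m i₁ + M) (s : A) :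
    ∃ c : ι → A, ∑ i, c i = s ∧ ∑ i, F i (c i) ≤ ∑ i, m i + M := by
  classical
  choose c hc using hF
  set rest := (Finset.univ.erase i₀).erase i₁ with hrest
  obtain ⟨c₀, hc₀⟩ := hpair (s - ∑ i ∈ rest, c i)
  set c' := Function.update (Function.update c i₀ c₀) i₁ (s - ∑ i ∈ rest, c i - c₀) with hc'
  have hi₀ : c' i₀ = c₀ := by simp [hc', hne.symm]
  have hi₁ : c' i₁ = s - ∑ i ∈ rest, c i - c₀ := by simp [hc']
  have hother : ∀ i ∈ rest, c' i = c i := by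
    intro i hi
    rw [hrest, Finset.mem_erase, Finset.mem_erase] at hi
    simp [hc', hi]
  refine ⟨c', ?_, ?_⟩
  · rw [sum_eq_add_add_sum_erase_erase hne c', hi₀, hi₁, Finset.sum_congr rfl hother]
    abel
  · rw [sum_eq_add_add_sum_erase_erase hne, sum_eq_add_add_sum_erase_erase hne m, hi₀, hi₁]
    have : ∑ i ∈ rest, F i (c' i) ≤ ∑ i ∈ rest, m i :=
      Finset.sum_le_sum fun i hi => hother i hi ▸ hc i
    lia

theorem two_mul_sum_zmod_val (n : ℕ) [NeZero n] : 2 * ∑ z : ZMod n, z.val = n * (n - 1) := by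
  obtain ⟨n, rfl⟩ := Nat.exists_eq_succ_of_ne_zero (NeZero.ne n)
  rw [← Finset.sum_range_id_mul_two, mul_comm, ← Fin.sum_univ_eq_sum_range (fun i => i)]
  rfl

theorem exists_le_of_two_mul_sum_le {n : ℕ} [NeZero n] {F : ZMod n → ℕ} {s : ZMod n}
    (hF : ∀ c, (F c : ZMod n) = s + c) {m : ℕ} (hsum : 2 * ∑ c, F c ≤ n * (2 * m + (n - 1))) :
    ∃ c, F c ≤ m := by
  -- If all values exceed `m`, then they are at least `m + 1, …, m + n`, being distinct modulo `n`.
  by_contra! hlt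
  have hstep : ∀ c, m + 1 + (s - (m + 1) + c).val ≤ F c := by
    intro c
    have hcast : ((F c - (m + 1) : ℕ) : ZMod n) = s - (m + 1) + c := by
      rw [Nat.cast_sub (hlt c), hF]
      push_cast
      ring
    rw [← hcast]
    have := Nat.mod_le (F c - (m + 1)) n
    have := hlt c
    rw [ZMod.val_natCast]
    lia
  have hval : ∑ c, (s - (m + 1) + c).val = ∑ z : ZMod n, z.val :=
    Equiv.sum_comp (Equiv.addLeft (s - (m + 1))) ZMod.val
  have hge : ∑ c : ZMod n, (m + 1 + (s - (m + 1) + c).val) ≤ ∑ c, F c :=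
    Finset.sum_le_sum fun c _ => hstep c
  rw [Finset.sum_add_distrib, hval, Finset.sum_const, Finset.card_univ, ZMod.card,
    smul_eq_mul] at hge
  have := two_mul_sum_zmod_val n
  have := NeZero.pos n
  nlinarith

end Averaging

section AlternatingWeight

variable {n k : ℕ}

/-- The total degree of the least nonnegative exponents on a path of length `k` after the exponents
`a` are twisted by `c, -c, c, …` along the path. -/
def alternatingWeight (a : Fin k → ZMod n) (c : ZMod n) : ℕ :=
  ∑ j, (a j + (-1) ^ (j : ℕ) * c).val

variable [NeZero n]

theorem natCast_alternatingWeight (a : Fin k → ZMod n) (c : ZMod n) :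
    (alternatingWeight a c : ZMod n) = ∑ j, a j + (if Even k then 0 else 1) * c := by
  rw [alternatingWeight, ← neg_one_geom_sum, ← Fin.sum_univ_eq_sum_range, Finset.sum_mul,
    ← Finset.sum_add_distrib, Nat.cast_sum]
  simp only [ZMod.natCast_zmod_val]

theorem two_mul_sum_alternatingWeight (a : Fin k → ZMod n) :
    2 * ∑ c, alternatingWeight a c = k * (n * (n - 1)) := by
  have hedge : ∀ j, ∑ c, (a j + (-1) ^ (j : ℕ) * c).val = ∑ z : ZMod n, z.val := by
    intro j
    have hunit : IsUnit ((-1 : ZMod n) ^ (j : ℕ)) := isUnit_one.neg.pow _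
    exact Equiv.sum_comp (hunit.unit.mulLeft.trans (Equiv.addLeft (a j))) ZMod.val
  simp only [alternatingWeight]
  rw [Finset.sum_comm, Finset.sum_congr rfl fun j _ => hedge j, Finset.sum_const,
    Finset.card_univ, Fintype.card_fin, smul_eq_mul, ← two_mul_sum_zmod_val, mul_left_comm]

theorem exists_alternatingWeight_le (a : Fin k → ZMod n) :
    ∃ c, alternatingWeight a c ≤ k / 2 * (n - 1) := by
  have hsum := two_mul_sum_alternatingWeight a
  obtain ⟨m, rfl | rfl⟩ := k.even_or_odd'
  · have hm : 2 * m / 2 = m := by lia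
    have hle : ∑ c, alternatingWeight a c ≤ ∑ _c : ZMod n, m * (n - 1) := by
      rw [Finset.sum_const, Finset.card_univ, ZMod.card, smul_eq_mul]
      lia
    obtain ⟨c, -, hc⟩ := Finset.exists_le_of_sum_le Finset.univ_nonempty hle
    exact ⟨c, by rwa [hm]⟩
  · have hm : (2 * m + 1) / 2 = m := by lia
    rw [hm]
    refine exists_le_of_two_mul_sum_le (s := ∑ j, a j) (fun c => ?_) (by lia)
    simp [natCast_alternatingWeight]

theorem exists_alternatingWeight_add_le {k' δ : ℕ} (hk : k % 2 = δ) (hk' : k' % 2 = δ)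
    (a : Fin k → ZMod n) (a' : Fin k' → ZMod n) (t : ZMod n) :
    ∃ c, alternatingWeight a c + alternatingWeight a' (t - c) ≤
      k / 2 * (n - 1) + k' / 2 * (n - 1) + δ * (n - 1) := by
  refine exists_add_sub_le _ _ t ?_
  have hsum := two_mul_sum_alternatingWeight a
  have hsum' := two_mul_sum_alternatingWeight a'
  have hkk' : k + k' = 2 * (k / 2 + k' / 2 + δ) := by lia
  rw [ZMod.card, ← Nat.mul_le_mul_left_iff two_pos, mul_add, hsum, hsum', ← add_mul, hkk']
  exact (by ring : _ = _).le

end AlternatingWeight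

/-! ### Parallel compositions of paths -/

section ParallelComp

variable {ι : Type} {k : ι → ℕ} {δ : ℕ}

theorem sum_neg_one_pow_mul_add {R : Type*} [CommRing R] (g : ℕ → R) (m : ℕ) :
    ∑ j ∈ Finset.range m, (-1) ^ j * (g j + g (j + 1)) = g 0 - (-1) ^ m * g m := by
  induction m with
  | zero => simp
  | succ m ih =>
    rw [Finset.sum_range_succ, ih]
    ring

theorem pcVert_zero (i : ι) : pcVert k i 0 = Sum.inl false := rfl

theorem pcVert_length {i : ι} (hk : 0 < k i) : pcVert k i (k i) = Sum.inl true := by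
  simp [pcVert, hk.ne']

theorem noIsolated_parallelComp [Nonempty ι] (hk : ∀ i, 0 < k i) :
    (parallelComp k).NoIsolated := by
  obtain ⟨i₀⟩ := ‹Nonempty ι›
  rintro ((_ | _) | ⟨i, l⟩)
  · exact ⟨⟨i₀, 0, hk i₀⟩, .inl (pcVert_zero i₀)⟩
  · refine ⟨⟨i₀, k i₀ - 1, Nat.sub_one_lt (hk i₀).ne'⟩, .inr ?_⟩
    change pcVert k i₀ (k i₀ - 1 + 1) = _
    rw [Nat.sub_add_cancel (hk i₀), pcVert_length (hk i₀)]
  · refine ⟨⟨i, l, by lia⟩, .inr ?_⟩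
    change pcVert k i (l + 1) = _
    rw [pcVert, dif_neg (Nat.succ_ne_zero _), dif_pos (by lia)]
    rfl

variable [Fintype ι]

theorem alternating_mem_exponentRelations (hk : ∀ i, 0 < k i) (hδ : ∀ i, k i % 2 = δ)
    {R : Type*} [CommRing R] {c : ι → R} (hc : ∑ i, c i = 0) :
    (fun e => (-1) ^ (e.2 : ℕ) * c e.1) ∈ (parallelComp k).exponentRelations R := by
  refine ⟨?_, fun y => ?_⟩
  · have hpath : ∀ i, ∑ j : Fin (k i), (-1) ^ (j : ℕ) * c i = (if Even δ then 0 else 1) * c i := by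
      intro i
      rw [← Finset.sum_mul, Fin.sum_univ_eq_sum_range (fun j => (-1 : R) ^ j), neg_one_geom_sum]
      have heven : Even (k i) ↔ Even δ := by rw [Nat.even_iff, Nat.even_iff, ← hδ i, Nat.mod_mod]
      simp only [heven]
    rw [Fintype.sum_sigma, Finset.sum_congr rfl fun i _ => hpath i, ← Finset.mul_sum, hc, mul_zero]
  · have hpath : ∀ i, ∑ j : Fin (k i),
        (-1) ^ (j : ℕ) * c i * (parallelComp k).edgeSum y ⟨i, j⟩ =
          c i * (y (Sum.inl false) - (-1) ^ δ * y (Sum.inl true)) := by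
      intro i
      have htel := sum_neg_one_pow_mul_add (fun j => y (pcVert k i j)) (k i)
      rw [pcVert_zero, pcVert_length (hk i), neg_one_pow_eq_pow_mod_two, hδ,
        ← Fin.sum_univ_eq_sum_range
          (fun j => (-1) ^ j * (y (pcVert k i j) + y (pcVert k i (j + 1))))] at htel
      rw [← htel, Finset.mul_sum]
      exact Finset.sum_congr rfl fun j _ => mul_right_comm _ _ _ |>.trans (mul_comm _ _)
    rw [Fintype.sum_sigma, Finset.sum_congr rfl fun i _ => hpath i, ← Finset.sum_mul, hc, zero_mul]

theorem exists_represents_parallelComp_sum_le [Nontrivial ι] (hk : ∀ i, 0 < k i)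
    (hδ : ∀ i, k i % 2 = δ) {n : ℕ} [NeZero n] (a : (i : ι) × Fin (k i) → ZMod n) :
    ∃ b, (parallelComp k).Represents b a ∧ ∑ e, b e ≤ (∑ i, k i / 2 + δ) * (n - 1) := by
  obtain ⟨i₀, i₁, hne⟩ := exists_pair_ne ι
  obtain ⟨c, hc, hle⟩ := exists_sum_eq_sum_le hne.symm
    (fun i => exists_alternatingWeight_le fun j => a ⟨i, j⟩)
    (exists_alternatingWeight_add_le (hδ i₀) (hδ i₁) _ _) 0
  refine ⟨_, (parallelComp k).represents_val_add a (alternating_mem_exponentRelations hk hδ hc), ?_⟩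
  rw [Fintype.sum_sigma, add_mul, Finset.sum_mul]
  exact hle

theorem card_filter_even_fin (m : ℕ) :
    (Finset.univ.filter fun l : Fin m => Even (l : ℕ)).card = (m + 1) / 2 := by
  rw [Finset.card_filter, Fin.sum_univ_eq_sum_range (fun l => if Even l then 1 else 0)]
  induction m with
  | zero => rfl
  | succ m ih =>
    rw [Finset.sum_range_succ, ih]
    grind

/-- The vertices at odd distance from the initial vertex in the parallel composition of paths whose
lengths have the parity of `δ`. The interior vertex at distance `j` has index `j - 1`. -/
def oddVertices (k : ι → ℕ) (δ : ℕ) : Finset (Bool ⊕ ((i : ι) × Fin (k i - 1))) :=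
  (if Odd δ then {true} else ∅ : Finset Bool).disjSum
    (Finset.univ.sigma fun i => Finset.univ.filter fun l : Fin (k i - 1) => Even (l : ℕ))

theorem pcVert_mem_oddVertices (hδ : ∀ i, k i % 2 = δ) {i : ι} {j : ℕ} (hj : j ≤ k i) :
    pcVert k i j ∈ oddVertices k δ ↔ Odd j := by
  have := hδ i
  unfold pcVert oddVertices
  split_ifs <;>
    simp only [Finset.inl_mem_disjSum, Finset.inr_mem_disjSum, Finset.mem_sigma, Finset.mem_filter,
      Finset.mem_univ, true_and, Finset.mem_singleton, Finset.notMem_empty] <;>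
    grind

theorem card_oddVertices [Nonempty ι] (hk : ∀ i, 0 < k i) (hδ : ∀ i, k i % 2 = δ) :
    (oddVertices k δ).card = ∑ i, k i / 2 + δ := by
  obtain ⟨i₀⟩ := ‹Nonempty ι›
  have hend : (if Odd δ then {true} else ∅ : Finset Bool).card = δ := by
    have := hδ i₀
    split_ifs
    · rw [Finset.card_singleton]
      grind
    · rw [Finset.card_empty]
      grind
  rw [oddVertices, Finset.card_disjSum, Finset.card_sigma, hend, add_comm]
  simp only [card_filter_even_fin, Nat.sub_add_cancel (hk _)]

theorem isIndependent_oddVertices (hδ : ∀ i, k i % 2 = δ) :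
    (parallelComp k).IsIndependent (oddVertices k δ) := by
  intro e
  change ¬(pcVert k e.1 e.2 ∈ _ ∧ pcVert k e.1 (e.2 + 1) ∈ _)
  rw [pcVert_mem_oddVertices hδ e.2.2.le, pcVert_mem_oddVertices hδ e.2.2]
  grind

end ParallelComp

theorem reg_parallelComp_same_parity_general (K : Type) [Field K] [Fintype K] {ι : Type}
    [Fintype ι] [Nontrivial ι] (k : ι → ℕ) (hk : ∀ i, 0 < k i) {δ : ℕ}
    (hδ : ∀ i, k i % 2 = δ) :
    (parallelComp k).reg K = (∑ i, k i / 2 + δ - 1) * (Fintype.card K - 2) := by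
  have hcard : Fintype.card K - 2 = Nat.card Kˣ - 1 := by
    rw [Nat.card_units, Nat.card_eq_fintype_card, Nat.sub_sub]
  obtain ⟨i₀⟩ : Nonempty ι := inferInstance
  have hedges : Nonempty ((i : ι) × Fin (k i)) := ⟨⟨i₀, 0, hk i₀⟩⟩
  have hpos : 0 < ∑ i, k i / 2 + δ := by
    have hle : k i₀ / 2 ≤ ∑ i, k i / 2 :=
      Finset.single_le_sum (f := fun i => k i / 2) (by simp) (Finset.mem_univ i₀)
    have := hk i₀
    have := hδ i₀
    lia
  rw [hcard]
  refine le_antisymm ?_ ?_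
  · refine (parallelComp k).reg_le fun a => ?_
    rw [← Nat.succ_mul, Nat.succ_eq_add_one, Nat.sub_add_cancel hpos]
    exact exists_represents_parallelComp_sum_le hk hδ a
  · rw [← card_oddVertices hk hδ]
    exact (parallelComp k).card_sub_one_mul_le_reg (noIsolated_parallelComp hk)
      (isIndependent_oddVertices hδ)

/-- **Theorem 1.1.**  Let `G` be the parallel composition of `r ≥ 2` paths of lengths
`k 0, ..., k (r-1)`, all of the same parity.  If all `k i` are odd then
`reg G = (⌊k 0/2⌋ + ... + ⌊k (r-1)/2⌋)(q-2)`; if all `k i` are even then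
`reg G = (k 0/2 + ... + k (r-1)/2 - 1)(q-2)`, where `q = |K|`. -/
theorem reg_parallelComp_same_parity
    (K : Type) [Field K] [Fintype K] (r : ℕ) (hr : 2 ≤ r)
    (k : Fin r → ℕ) (hk : ∀ i, 0 < k i)
    (hpar : ∀ i j, (Odd (k i) ↔ Odd (k j))) :
    ((∀ i, Odd (k i)) →
      (parallelComp k).reg K = (∑ i, k i / 2) * (Fintype.card K - 2)) ∧
    ((∀ i, Even (k i)) →
      (parallelComp k).reg K = ((∑ i, k i / 2) - 1) * (Fintype.card K - 2)) := by
  have : Nontrivial (Fin r) := Fin.nontrivial_iff_two_le.mpr hr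
  exact ⟨fun h => reg_parallelComp_same_parity_general K k hk fun i => Nat.odd_iff.mp (h i),
    fun h => reg_parallelComp_same_parity_general K k hk fun i => Nat.even_iff.mp (h i)⟩
end

section
/- Let G be a graph with X the projective toric subset it parameterizes. Let u_0, u_1, ..., u_m be distinct vertices of G joined consecutively by edges e_1,...,e_m of G (e_p has endpoints u_{p−1} and u_p), and suppose every interior vertex u_1,...,u_{m−1} has degree 2 in G. Let t_i = e_p and t_j = e_{p'} be two of these edges with p ≡ p' (mod 2), and let σ : S → S be the K-algebra automorphism that swaps the variables t_i and t_j and fixes all other variables. Then for any homogeneous binomial t^a − t^b in S, one has t^a − t^b ∈ I(X) if and only if σ(t^a) − σ(t^b) ∈ I(X). -/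
open MvPolynomial

/-!
For `M = Kˣ`, the points `(x^{t_1}, …, x^{t_s})` form the subgroup `G.torus M` of `E → M`. Rescaling
`x` by `c` at a vertex of degree two multiplies the coordinates of its two edges by `c`. Hence,
modulo the torus, the vectors supported on consecutive edges of an ear with entry `c` are mutually
inverse, and those on two edges in positions of the same parity agree. Exchanging the coordinates
`i` and `j` of `t` amounts to multiplying `t` by `c = t j / t i` at `i` and by `c⁻¹` at `j`, so such
an exchange maps the torus to itself, and the swap of variables maps the vanishing ideal to itself.
-/

theorem eq_of_mul_succ_eq_one_of_mod_two_eq {A : Type*} [Group A] {m : ℕ} {g : Fin m → A}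
    (hg : ∀ i j : Fin m, i.1 + 1 = j.1 → g i * g j = 1)
    {p q : Fin m} (hpq : p.1 % 2 = q.1 % 2) : g p = g q := by
  have eq_zpow_neg_one_pow : ∀ (n : ℕ) (hn : n < m), g ⟨n, hn⟩ = g ⟨0, by lia⟩ ^ (-1 : ℤ) ^ n := by
    intro n
    induction n with
    | zero => simp
    | succ n ih =>
      intro hn
      calc g ⟨n + 1, hn⟩ = (g ⟨n, by lia⟩)⁻¹ := eq_inv_of_mul_eq_one_right (hg _ _ rfl)
        _ = g ⟨0, by lia⟩ ^ (-1 : ℤ) ^ (n + 1) := by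
          rw [ih, ← zpow_neg, pow_succ, mul_neg_one]
  rw [eq_zpow_neg_one_pow p p.2, eq_zpow_neg_one_pow q q.2, neg_one_pow_eq_pow_mod_two, hpq,
    ← neg_one_pow_eq_pow_mod_two]

theorem comp_swap_eq_mul_mulSingle_div {ι M : Type*} [DecidableEq ι] [CommGroup M]
    (t : ι → M) (i j : ι) :
    t ∘ Equiv.swap i j = t * (Pi.mulSingle i (t j / t i) / Pi.mulSingle j (t j / t i)) := by
  ext k
  simp only [Function.comp_apply, Equiv.swap_apply_def, Pi.mul_apply, Pi.div_apply,
    Pi.mulSingle_apply]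
  split_ifs <;> simp_all

theorem comp_swap_mem_of_mulSingle_div_mem {ι M : Type*} [DecidableEq ι] [CommGroup M]
    {T : Subgroup (ι → M)} {i j : ι}
    (hij : ∀ c : M, Pi.mulSingle i c / Pi.mulSingle j c ∈ T) {t : ι → M} (ht : t ∈ T) :
    t ∘ Equiv.swap i j ∈ T := by
  rw [comp_swap_eq_mul_mulSingle_div]
  exact T.mul_mem ht (hij _)

namespace Multigraph

variable {V E : Type} {G : Multigraph V E}

/-- The parameterization `x ↦ (x^{t_1}, …, x^{t_s})` of the toric set, over an arbitrary commutative
monoid `M` in place of `Kˣ`, as a homomorphism. -/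
def edgeProd (G : Multigraph V E) (M : Type*) [CommMonoid M] : (V → M) →* (E → M) where
  toFun x e := x (G.fst e) * x (G.snd e)
  map_one' := by ext; simp
  map_mul' x y := by ext; simp only [Pi.mul_apply, mul_mul_mul_comm]

/-- The group of all vectors `(x^{t_1}, …, x^{t_s})`; for `M = Kˣ` its image in projective space is
the toric set `X`. -/
def torus (G : Multigraph V E) (M : Type*) [CommGroup M] : Subgroup (E → M) :=
  (G.edgeProd M).range

theorem incident_iff_of_degree_eq_two {v : V} (hv : G.degree v = 2) {i j : E} (hij : i ≠ j)
    (hi : G.Incident v i) (hj : G.Incident v j) (k : E) : G.Incident v k ↔ k = i ∨ k = j := by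
  refine ⟨fun hk => or_iff_not_imp_left.2 fun hki => ?_, by rintro (rfl | rfl) <;> assumption⟩
  have exists_unique_ne := (Nat.card_eq_two_iff' (⟨i, hi⟩ : {e // G.Incident v e})).1 hv
  simpa using exists_unique_ne.unique (y₁ := ⟨k, hk⟩) (y₂ := ⟨j, hj⟩)
    (by simpa using hki) (by simpa using hij.symm)

theorem edgeProd_mulSingle [DecidableEq V] {M : Type*} [CommMonoid M] (v : V) (c : M) (k : E) :
    G.edgeProd M (Pi.mulSingle v c) k = if G.Incident v k then c else 1 := by
  have hne := G.ne k
  simp only [edgeProd, MonoidHom.coe_mk, OneHom.coe_mk, Pi.mulSingle_apply, Incident]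
  split_ifs <;> simp_all

theorem mulSingle_mul_mulSingle_mem_torus [DecidableEq E] {M : Type*} [CommGroup M]
    {v : V} (hv : G.degree v = 2) {i j : E} (hij : i ≠ j)
    (hi : G.Incident v i) (hj : G.Incident v j) (c : M) :
    Pi.mulSingle i c * Pi.mulSingle j c ∈ G.torus M := by
  classical
  refine ⟨Pi.mulSingle v c, funext fun k => ?_⟩
  simp only [edgeProd_mulSingle, incident_iff_of_degree_eq_two hv hij hi hj, Pi.mul_apply,
    Pi.mulSingle_apply]
  split_ifs <;> simp_all

/-- An ear of `G`: a path with distinct vertices `u 0, …, u m` and edges `e 0, …, e (m - 1)`, the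
edge `e p` joining `u p` and `u (p + 1)`, whose interior vertices have degree two in `G`. -/
structure IsEar (G : Multigraph V E) {m : ℕ} (u : Fin (m + 1) → V) (e : Fin m → E) : Prop where
  injective : Function.Injective u
  endpoints : ∀ p : Fin m,
    (G.fst (e p) = u p.castSucc ∧ G.snd (e p) = u p.succ) ∨
    (G.fst (e p) = u p.succ ∧ G.snd (e p) = u p.castSucc)
  degree_eq_two : ∀ j : Fin (m + 1), j ≠ 0 → j ≠ Fin.last m → G.degree (u j) = 2

namespace IsEar

variable {m : ℕ} {u : Fin (m + 1) → V} {e : Fin m → E}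

theorem incident_iff (h : G.IsEar u e) (p : Fin m) (j : Fin (m + 1)) :
    G.Incident (u j) (e p) ↔ j = p.castSucc ∨ j = p.succ := by
  rcases h.endpoints p with ⟨hfst, hsnd⟩ | ⟨hfst, hsnd⟩ <;>
    simp only [Incident, hfst, hsnd, h.injective.eq_iff, eq_comm, or_comm]

theorem edge_injective (h : G.IsEar u e) : Function.Injective e := by
  intro p q hpq
  have hp := (h.incident_iff q p.castSucc).1 (hpq ▸ (h.incident_iff p _).2 (.inl rfl))
  have hp' := (h.incident_iff q p.succ).1 (hpq ▸ (h.incident_iff p _).2 (.inr rfl))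
  simp only [Fin.ext_iff, Fin.val_castSucc, Fin.val_succ] at hp hp' ⊢
  lia

variable {M : Type*} [CommGroup M] [DecidableEq E]

theorem mulSingle_mul_mulSingle_succ_mem_torus (h : G.IsEar u e) {p q : Fin m}
    (hpq : p.1 + 1 = q.1) (c : M) : Pi.mulSingle (e p) c * Pi.mulSingle (e q) c ∈ G.torus M := by
  have hsucc : p.succ = q.castSucc := Fin.ext hpq
  have hdeg : G.degree (u p.succ) = 2 :=
    h.degree_eq_two _ p.succ_ne_zero (hsucc ▸ q.castSucc_ne_last)
  have hne : e p ≠ e q := h.edge_injective.ne (by rw [ne_eq, Fin.ext_iff]; lia)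
  exact mulSingle_mul_mulSingle_mem_torus hdeg hne
    ((h.incident_iff p _).2 (.inr rfl)) ((h.incident_iff q _).2 (.inl hsucc)) c

theorem mulSingle_div_mulSingle_mem_torus (h : G.IsEar u e) {p q : Fin m}
    (hpq : p.1 % 2 = q.1 % 2) (c : M) :
    Pi.mulSingle (e p) c / Pi.mulSingle (e q) c ∈ G.torus M := by
  rw [← QuotientGroup.eq_iff_div_mem]
  refine eq_of_mul_succ_eq_one_of_mod_two_eq
    (g := fun r => ((Pi.mulSingle (e r) c : E → M) : (E → M) ⧸ G.torus M)) (fun r s hrs => ?_) hpq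
  exact (QuotientGroup.eq_one_iff _).2 (h.mulSingle_mul_mulSingle_succ_mem_torus hrs c)

end IsEar

variable {K : Type} [Field K]

theorem mem_vanishingIdeal_iff {f : MvPolynomial E K} :
    f ∈ G.vanishingIdeal K ↔ ∀ t ∈ G.torus Kˣ, ∀ d : ℕ,
      eval (fun i => (t i : K)) (homogeneousComponent d f) = 0 := by
  simp only [torus, MonoidHom.mem_range, forall_exists_index, forall_apply_eq_imp_iff]
  exact Iff.rfl

theorem rename_mem_vanishingIdeal {σ : E → E} (hσ : ∀ t ∈ G.torus Kˣ, t ∘ σ ∈ G.torus Kˣ)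
    {f : MvPolynomial E K} (hf : f ∈ G.vanishingIdeal K) : rename σ f ∈ G.vanishingIdeal K := by
  rw [mem_vanishingIdeal_iff] at hf ⊢
  intro t ht d
  rw [← rename_homogeneousComponent, eval_rename]
  exact hf _ (hσ t ht) d

end Multigraph

theorem vanishingIdeal_swap_ear_general {V E : Type} [DecidableEq E]
    (K : Type) [Field K] {G : Multigraph V E}
    {m : ℕ} {u : Fin (m + 1) → V} {e : Fin m → E} (h : G.IsEar u e)
    {p p' : Fin m} (hpar : p.1 % 2 = p'.1 % 2) (f : MvPolynomial E K) :
    f ∈ G.vanishingIdeal K ↔ rename (Equiv.swap (e p) (e p')) f ∈ G.vanishingIdeal K := by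
  have comp_swap_mem_torus : ∀ t ∈ G.torus Kˣ, t ∘ Equiv.swap (e p) (e p') ∈ G.torus Kˣ :=
    fun _ ht => comp_swap_mem_of_mulSingle_div_mem (h.mulSingle_div_mulSingle_mem_torus hpar) ht
  refine ⟨Multigraph.rename_mem_vanishingIdeal comp_swap_mem_torus, fun hf => ?_⟩
  have rename_rename_mem := Multigraph.rename_mem_vanishingIdeal comp_swap_mem_torus hf
  rwa [rename_rename, ← Equiv.coe_trans, Equiv.swap_swap, Equiv.coe_refl, rename_id_apply]
    at rename_rename_mem

/-- **Lemma 2.2** (swapping edges along an ear).  Let `u 0, ..., u m` be distinct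
vertices of `G` joined consecutively by edges `e 0, ..., e (m-1)`, every interior
vertex having degree `2` in `G`.  If `e p` and `e p'` are two of those edges in the
same parity position, and `σ` swaps the corresponding two variables, then for a
homogeneous binomial `t^a - t^b` one has `t^a - t^b ∈ I(X) ↔ σ(t^a) - σ(t^b) ∈ I(X)`. -/
theorem vanishingIdeal_swap_ear
    {V E : Type} [Fintype V] [DecidableEq V] [Fintype E] [DecidableEq E]
    (K : Type) [Field K] [Fintype K]
    (G : Multigraph V E) (hG : G.NoIsolated) (m : ℕ)
    (u : Fin (m + 1) → V) (hu : Function.Injective u) (e : Fin m → E)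
    (he : ∀ p : Fin m,
      (G.fst (e p) = u p.castSucc ∧ G.snd (e p) = u p.succ) ∨
      (G.fst (e p) = u p.succ ∧ G.snd (e p) = u p.castSucc))
    (hdeg : ∀ j : Fin (m + 1), j ≠ 0 → j ≠ Fin.last m → G.degree (u j) = 2)
    (p p' : Fin m) (hpar : p.1 % 2 = p'.1 % 2)
    (a b : E →₀ ℕ) (hhom : (a.sum fun _ n => n) = b.sum fun _ n => n) :
    monomial a (1 : K) - monomial b 1 ∈ G.vanishingIdeal K ↔
      rename (Equiv.swap (e p) (e p')) (monomial a (1 : K)) -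
        rename (Equiv.swap (e p) (e p')) (monomial b 1) ∈ G.vanishingIdeal K := by
  rw [← map_sub]
  exact vanishingIdeal_swap_ear_general K ⟨hu, he, hdeg⟩ hpar _
end

section
/- Let G be a graph with X the projective toric subset it parameterizes, and let g ∈ S be a monomial. A monomial t^a ∈ S belongs to the ideal (I(X), g) of S if and only if there exists a monomial t^b ∈ S such that t^a − g·t^b is homogeneous (i.e., deg t^a = deg g + deg t^b) and belongs to I(X). -/
open MvPolynomial

/-!
The monomials, evaluated along the parameterization of `X`, are characters of the torus. If
`t^a = f + h·g` with `f ∈ I(X)`, then in degree `|a|` the character of `t^a` is a linear combination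
of the characters of the monomials of `h·g`, all of which are divisible by `g`. By Dedekind's
independence of characters it equals one of them, say that of `g·t^b`; and two monomials of the same
degree with the same character differ by an element of `I(X)`.
-/

section Polynomials

variable {σ R : Type*} [CommSemiring R]

theorem le_of_mem_support_of_mem_span_monomial {c n : σ →₀ ℕ} {p : MvPolynomial σ R}
    (hp : p ∈ Ideal.span {monomial c (1 : R)}) (hn : n ∈ p.support) : c ≤ n := by
  rw [← Set.image_singleton (f := fun m => monomial m (1 : R)),
    mem_ideal_span_monomial_image] at hp
  simpa using hp n hn

theorem homogeneousComponent_monomial_degree (n : σ →₀ ℕ) (r : R) :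
    homogeneousComponent n.degree (monomial n r) = monomial n r :=
  homogeneousComponent_eq_self (isHomogeneous_monomial r rfl)

attribute [local instance] MvPolynomial.gradedAlgebra

theorem mem_homogeneousCore_iff_homogeneousComponent_mem {I : Ideal (MvPolynomial σ R)}
    {f : MvPolynomial σ R} :
    f ∈ (I.homogeneousCore (homogeneousSubmodule σ R)).toIdeal ↔
      ∀ d, homogeneousComponent d f ∈ I := by
  rw [mem_iff_homogeneousComponent_mem (HomogeneousIdeal.isHomogeneous _)]
  exact forall_congr' fun d =>
    ⟨fun h => Ideal.toIdeal_homogeneousCore_le _ _ h,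
      Ideal.mem_homogeneousCore_of_homogeneous_of_mem ⟨d, homogeneousComponent_mem d f⟩⟩

/-- The homogeneous vanishing ideal of the set parameterized by a family of characters
`χ i : M →* R`, that is, of the points `(χ i x)_i` for `x : M`. The ideal `I(X)` of a graph is the
case where `M` is the torus `(Kˣ)^V` and the characters are the edges. -/
noncomputable def toricVanishingIdeal {M : Type*} [MulOneClass M] (χ : σ → M →* R) :
    Ideal (MvPolynomial σ R) :=
  ((⨅ x, RingHom.ker (eval fun i => χ i x)).homogeneousCore
    (homogeneousSubmodule σ R)).toIdeal

theorem mem_toricVanishingIdeal_iff {M : Type*} [MulOneClass M] {χ : σ → M →* R}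
    {f : MvPolynomial σ R} :
    f ∈ toricVanishingIdeal χ ↔
      ∀ (x : M) (d : ℕ), eval (fun i => χ i x) (homogeneousComponent d f) = 0 := by
  simp only [toricVanishingIdeal, mem_homogeneousCore_iff_homogeneousComponent_mem,
    Ideal.mem_iInf, RingHom.mem_ker]
  exact forall_comm

end Polynomials

section MonomialCharacter

variable {σ M R : Type*} [MulOneClass M]

/-- The character `χ^n = ∏ i, χ i ^ n i`, which sends `x` to the value of the monomial `t^n` at the
point `(χ i x)_i`. -/
noncomputable def monomialCharacter [CommMonoid R] (χ : σ → M →* R) (n : σ →₀ ℕ) : M →* R :=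
  n.prod fun i k => χ i ^ k

theorem eval_monomial_eq_mul_monomialCharacter [CommSemiring R] (χ : σ → M →* R) (n : σ →₀ ℕ)
    (r : R) (x : M) :
    eval (fun i => χ i x) (monomial n r) = r * monomialCharacter χ n x := by
  simp [eval_monomial, monomialCharacter, Finsupp.prod]

theorem eval_eq_sum_mul_monomialCharacter [CommSemiring R] (χ : σ → M →* R)
    (p : MvPolynomial σ R) (x : M) :
    eval (fun i => χ i x) p = ∑ n ∈ p.support, coeff n p * monomialCharacter χ n x := by
  conv_lhs => rw [p.as_sum]
  simp only [map_sum, eval_monomial_eq_mul_monomialCharacter]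

variable [CommRing R] {χ : σ → M →* R} {a c n : σ →₀ ℕ}

theorem exists_mem_support_monomialCharacter_eq [IsDomain R] {p : MvPolynomial σ R}
    (h : ∀ x, eval (fun i => χ i x) p = monomialCharacter χ a x) :
    ∃ n ∈ p.support, monomialCharacter χ n = monomialCharacter χ a := by
  by_contra hne
  refine (linearIndependent_monoidHom M R).notMem_span_image
    (s := monomialCharacter χ '' p.support) hne ?_
  have hcomb : ⇑(monomialCharacter χ a) =
      ∑ n ∈ p.support, coeff n p • ⇑(monomialCharacter χ n) := by
    ext x
    simp [← h x, eval_eq_sum_mul_monomialCharacter]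
  rw [hcomb]
  exact Submodule.sum_mem _ fun n hn => Submodule.smul_mem _ _ <|
    Submodule.subset_span ⟨_, ⟨n, hn, rfl⟩, rfl⟩

theorem monomial_sub_monomial_mem_toricVanishingIdeal (hdeg : a.degree = n.degree)
    (hχ : monomialCharacter χ n = monomialCharacter χ a) :
    monomial a (1 : R) - monomial n 1 ∈ toricVanishingIdeal χ := by
  have hhom : (monomial a (1 : R) - monomial n 1).IsHomogeneous a.degree :=
    (isHomogeneous_monomial 1 rfl).sub (isHomogeneous_monomial 1 hdeg.symm)
  refine mem_toricVanishingIdeal_iff.mpr fun x d => ?_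
  rw [homogeneousComponent_of_mem hhom]
  split_ifs
  · rw [map_sub, eval_monomial_eq_mul_monomialCharacter, eval_monomial_eq_mul_monomialCharacter,
      hχ, sub_self]
  · exact map_zero _

theorem exists_degree_eq_monomialCharacter_eq_of_mem_sup [IsDomain R]
    (h : monomial a (1 : R) ∈ toricVanishingIdeal χ ⊔ Ideal.span {monomial c (1 : R)}) :
    ∃ n, c ≤ n ∧ n.degree = a.degree ∧ monomialCharacter χ n = monomialCharacter χ a := by
  obtain ⟨f, hf, p, hp, hfp⟩ := Submodule.mem_sup.mp h
  have hχ : ∀ x, eval (fun i => χ i x) (homogeneousComponent a.degree p) =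
      monomialCharacter χ a x := fun x => by
    have hfx := mem_toricVanishingIdeal_iff.mp hf x a.degree
    rw [eq_sub_of_add_eq hfp, map_sub, homogeneousComponent_monomial_degree, map_sub,
      eval_monomial_eq_mul_monomialCharacter, one_mul, sub_eq_zero] at hfx
    exact hfx.symm
  obtain ⟨n, hn, hna⟩ := exists_mem_support_monomialCharacter_eq hχ
  rw [support_homogeneousComponent, Finset.mem_filter] at hn
  exact ⟨n, le_of_mem_support_of_mem_span_monomial hp hn.1, hn.2, hna⟩

end MonomialCharacter

theorem monomial_mem_vanishingIdeal_sup_span_general {σ M R : Type*} [MulOneClass M] [CommRing R]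
    [IsDomain R] (χ : σ → M →* R) (c a : σ →₀ ℕ) :
    monomial a (1 : R) ∈ toricVanishingIdeal χ ⊔ Ideal.span {monomial c (1 : R)} ↔
      ∃ b : σ →₀ ℕ, a.degree = c.degree + b.degree ∧
        monomial a (1 : R) - monomial c 1 * monomial b 1 ∈ toricVanishingIdeal χ := by
  constructor
  · intro h
    obtain ⟨n, hcn, hdeg, hχ⟩ := exists_degree_eq_monomialCharacter_eq_of_mem_sup h
    obtain ⟨b, rfl⟩ := exists_add_of_le hcn
    refine ⟨b, by rw [← hdeg, map_add], ?_⟩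
    rw [monomial_mul, one_mul]
    exact monomial_sub_monomial_mem_toricVanishingIdeal hdeg.symm hχ
  · rintro ⟨b, -, hb⟩
    rw [← sub_add_cancel (monomial a (1 : R)) (monomial c 1 * monomial b 1)]
    exact Submodule.add_mem_sup hb
      (Ideal.mul_mem_right _ _ (Ideal.mem_span_singleton_self _))

namespace Multigraph

variable {V E : Type} (K : Type) [Field K]

/-- The edge `{v, w}` as the character `x ↦ x v * x w` of the torus `(Kˣ)^V`. -/
def edgeCharacter (G : Multigraph V E) (e : E) : (V → Kˣ) →* K :=
  (Units.coeHom K).comp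
    (Pi.evalMonoidHom (fun _ => Kˣ) (G.fst e) * Pi.evalMonoidHom (fun _ => Kˣ) (G.snd e))

theorem vanishingIdeal_eq_toricVanishingIdeal (G : Multigraph V E) :
    G.vanishingIdeal K = toricVanishingIdeal (G.edgeCharacter K) := by
  have hpoint (x : V → Kˣ) : (fun e => G.edgeCharacter K e x) = G.point K x := by
    ext e
    simp [edgeCharacter, point]
  ext f
  simp only [mem_toricVanishingIdeal_iff, hpoint]
  rfl

end Multigraph

/-- **Proposition 2.3(ii).**  Let `g = t^c` be a monomial.  A monomial `t^a` belongs
to the ideal `(I(X), g)` if and only if there is a monomial `t^b` such that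
`t^a - g·t^b` is homogeneous and belongs to `I(X)`. -/
theorem monomial_mem_vanishingIdeal_sup_span
    {V E : Type} [Fintype V] [DecidableEq V] [Fintype E] [DecidableEq E]
    (K : Type) [Field K] [Fintype K]
    (G : Multigraph V E) (hG : G.NoIsolated) (c a : E →₀ ℕ) :
    monomial a (1 : K) ∈ G.vanishingIdeal K ⊔ Ideal.span {monomial c (1 : K)} ↔
      ∃ b : E →₀ ℕ,
        (a.sum fun _ n => n) = (c.sum fun _ n => n) + (b.sum fun _ n => n) ∧
        monomial a (1 : K) - monomial c 1 * monomial b 1 ∈ G.vanishingIdeal K := by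
  rw [G.vanishingIdeal_eq_toricVanishingIdeal K]
  exact monomial_mem_vanishingIdeal_sup_span_general (G.edgeCharacter K) c a
end

section
/- Let G be a graph with X the projective toric subset it parameterizes, let v ∈ V_G be a vertex of degree 1, and assume |E_G| > 1. Let G' = G − v be the graph obtained by deleting v and its unique incident edge, let X' be the projective toric subset parameterized by G', and assume G' has no isolated vertices. Then reg(G) = reg(G') + (q−2). -/
open MvPolynomial

/-!
Write `q = |K|`. The regularity of `G` is the least `d` such that forms of degree `d` separate the
points of `X`: for each point there is a form of degree `d` vanishing at all the others but not
there. An edge `t₀` at a vertex of degree one is a free coordinate, so the affine points of `G` are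
the pairs `(z, y)` with `z ∈ Kˣ` and `y` an affine point of `G'`.

* If `F` singles out `y` and `t₁` is an edge of `G'`, then `F * ∏ (t₀ - u t₁)`, with `u` running
  over `Kˣ` except for the ratio of the coordinates `t₀` and `t₁` of `(z, y)`, singles out `(z, y)`.
  So `q - 2` extra degrees suffice.
* If `F` singles out `(1, y)`, then `y' ↦ ∑ z, z * F(z, y')` singles out `y`. Since `∑ z, z ^ k`
  vanishes unless `q - 1 ∣ k`, this function only sees the coefficients of `t₀ ^ j` in `F` with
  `q - 1 ∣ j + 1`. As `j ≥ q - 2` and `(q - 1)`-th powers of nonzero scalars are `1`, multiplying by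
  powers of `t₁` turns it into a form of degree `d - (q - 2)`.
-/

section EvalForms

variable {ι σ K : Type*} [Field K]

theorem eval_smul_of_isHomogeneous {F : MvPolynomial σ K} {d : ℕ} (hF : F.IsHomogeneous d)
    (c : K) (a : σ → K) : eval (c • a) F = c ^ d * eval a F := by
  rw [eval_eq, eval_eq, Finset.mul_sum]
  refine Finset.sum_congr rfl fun m hm ↦ ?_
  have degree_eq : ∑ i ∈ m.support, m i = d := (hF.degree_eq_sum_deg_support hm).symm
  simp only [Pi.smul_apply, smul_eq_mul, mul_pow, Finset.prod_mul_distrib,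
    Finset.prod_pow_eq_pow_sum, degree_eq]
  ring

theorem eval_ne_zero_iff_of_mem_orbit {F : MvPolynomial σ K} {d : ℕ} (hF : F.IsHomogeneous d)
    {a b : σ → K} (hb : b ∈ MulAction.orbit Kˣ a) : eval b F ≠ 0 ↔ eval a F ≠ 0 := by
  obtain ⟨c, rfl⟩ := hb
  simp [Units.smul_def, eval_smul_of_isHomogeneous hF]

/-- The evaluation of forms of degree `d` at the points of a family `p`. -/
noncomputable def evalForms (p : ι → σ → K) (d : ℕ) :
    homogeneousSubmodule σ K d →ₗ[K] ι → K :=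
  LinearMap.pi fun i ↦ (aeval (p i)).toLinearMap ∘ₗ (homogeneousSubmodule σ K d).subtype

theorem evalForms_apply (p : ι → σ → K) {d : ℕ} (F : homogeneousSubmodule σ K d) (i : ι) :
    evalForms p d F i = eval (p i) F.1 := by
  simp [evalForms, aeval_eq_eval]

theorem evalForms_surjective_iff [Finite ι] (p : ι → σ → K) (d : ℕ) :
    Function.Surjective (evalForms p d) ↔ ∀ i, ∃ F : MvPolynomial σ K,
      F.IsHomogeneous d ∧ eval (p i) F ≠ 0 ∧ ∀ j, eval (p j) F ≠ 0 → j = i := by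
  classical
  have := Fintype.ofFinite ι
  constructor
  · intro surj i
    obtain ⟨F, hF⟩ := surj (Pi.single i 1)
    have eval_eq (j : ι) : eval (p j) F.1 = Pi.single (M := fun _ ↦ K) i 1 j := by
      rw [← evalForms_apply, hF]
    exact ⟨F.1, F.2, by simp [eval_eq], fun j hj ↦ by simpa [eval_eq, Pi.single_apply] using hj⟩
  · intro h g
    choose F hom ne_zero eq_of_ne_zero using h
    refine ⟨∑ i, (g i / eval (p i) (F i)) • ⟨F i, hom i⟩, funext fun j ↦ ?_⟩
    rw [map_sum, Finset.sum_apply, Finset.sum_eq_single j]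
    · simp [evalForms_apply, ne_zero]
    · intro i _ hij
      have : eval (p j) (F i) = 0 := by_contra fun hne ↦ hij (eq_of_ne_zero i j hne).symm
      simp [evalForms_apply, this]
    · simp

end EvalForms

section SeparatedByForms

variable {ι σ τ K : Type*} [Field K]

/-- Forms of degree `d` separate the projective points represented by the vectors in `A`: each such
point is singled out by a form of degree `d` that vanishes at all the others. -/
def SeparatedByForms (A : Set (σ → K)) (d : ℕ) : Prop :=
  ∀ a ∈ A, ∃ F : MvPolynomial σ K, F.IsHomogeneous d ∧ eval a F ≠ 0 ∧
    ∀ b ∈ A, eval b F ≠ 0 → b ∈ MulAction.orbit Kˣ a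

/-- The least degree in which forms separate the projective points represented by `A`; it is `0` by
convention if there is none. -/
noncomputable def separationDegree (A : Set (σ → K)) : ℕ :=
  sInf {d | SeparatedByForms A d}

/-- The family `r` consists of one representative in `A` of each projective point represented
by `A`. -/
structure IsOrbitTransversal (A : Set (σ → K)) (r : ι → σ → K) : Prop where
  mem : ∀ i, r i ∈ A
  exists_mem_orbit : ∀ a ∈ A, ∃ i, a ∈ MulAction.orbit Kˣ (r i)
  eq_of_mem_orbit : ∀ i j, r j ∈ MulAction.orbit Kˣ (r i) → j = i

theorem IsOrbitTransversal.evalForms_surjective_iff_separatedByForms [Finite ι]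
    {A : Set (σ → K)} {r : ι → σ → K} (hr : IsOrbitTransversal A r) (d : ℕ) :
    Function.Surjective (evalForms r d) ↔ SeparatedByForms A d := by
  rw [evalForms_surjective_iff]
  constructor
  · intro h a ha
    obtain ⟨i, hai⟩ := hr.exists_mem_orbit a ha
    obtain ⟨F, hom, ne_zero, eq_of_ne_zero⟩ := h i
    refine ⟨F, hom, (eval_ne_zero_iff_of_mem_orbit hom hai).2 ne_zero, fun b hb hFb ↦ ?_⟩
    obtain ⟨j, hbj⟩ := hr.exists_mem_orbit b hb
    obtain rfl := eq_of_ne_zero j ((eval_ne_zero_iff_of_mem_orbit hom hbj).1 hFb)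
    rwa [MulAction.orbit_eq_iff.2 hai]
  · intro h i
    obtain ⟨F, hom, ne_zero, mem_orbit⟩ := h (r i) (hr.mem i)
    exact ⟨F, hom, ne_zero, fun j hj ↦ hr.eq_of_mem_orbit i j (mem_orbit _ (hr.mem j) hj)⟩

theorem SeparatedByForms.preimage_comp_equiv {A : Set (τ → K)} {d : ℕ} (h : SeparatedByForms A d)
    (φ : τ ≃ σ) : SeparatedByForms ((· ∘ φ) ⁻¹' A) d := by
  intro a ha
  obtain ⟨F, hom, ne_zero, mem_orbit⟩ := h _ ha
  refine ⟨rename φ F, hom.rename_isHomogeneous, by rwa [eval_rename], fun b hb hFb ↦ ?_⟩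
  obtain ⟨c, hc⟩ := mem_orbit _ hb (by rwa [eval_rename] at hFb)
  exact ⟨c, φ.surjective.injective_comp_right hc⟩

theorem separatedByForms_preimage_comp_equiv (A : Set (τ → K)) (d : ℕ) (φ : τ ≃ σ) :
    SeparatedByForms ((· ∘ φ) ⁻¹' A) d ↔ SeparatedByForms A d := by
  refine ⟨fun h ↦ ?_, fun h ↦ h.preimage_comp_equiv φ⟩
  have preimage_preimage : (· ∘ φ.symm) ⁻¹' ((· ∘ φ) ⁻¹' A) = A := by
    ext a
    simp [Function.comp_assoc]
  exact preimage_preimage ▸ h.preimage_comp_equiv φ.symm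

theorem separationDegree_preimage_comp_equiv (A : Set (τ → K)) (φ : τ ≃ σ) :
    separationDegree ((· ∘ φ) ⁻¹' A) = separationDegree A := by
  simp only [separationDegree, separatedByForms_preimage_comp_equiv]

end SeparatedByForms

section UnitExtension

variable {τ K : Type*} [Field K]

/-- The vectors indexed by `Option τ` obtained from those of `A` by adjoining an arbitrary nonzero
coordinate at `none`. -/
def unitExtension (A : Set (τ → K)) : Set (Option τ → K) :=
  {a | a none ≠ 0 ∧ a ∘ some ∈ A}

theorem elim_mem_unitExtension {A : Set (τ → K)} {y : τ → K} (hy : y ∈ A) (z : Kˣ) :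
    (fun o : Option τ ↦ o.elim (z : K) y) ∈ unitExtension A :=
  ⟨z.ne_zero, hy⟩

theorem eval_elim_eq_sum_range {F : MvPolynomial (Option τ) K} {d : ℕ} (hF : F.IsHomogeneous d)
    (z : K) (y : τ → K) :
    eval (fun o ↦ o.elim z y) F =
      ∑ j ∈ Finset.range (d + 1), eval y ((optionEquivLeft K τ F).coeff j) * z ^ j := by
  have natDegree_lt : ((optionEquivLeft K τ F).map (eval y)).natDegree < d + 1 :=
    calc ((optionEquivLeft K τ F).map (eval y)).natDegree
      _ ≤ F.degreeOf none := natDegree_optionEquivLeft K F ▸ Polynomial.natDegree_map_le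
      _ ≤ F.totalDegree := degreeOf_le_totalDegree F none
      _ < d + 1 := Nat.lt_succ_of_le hF.totalDegree_le
  rw [optionEquivLeft_elim_eval, Polynomial.eval_eq_sum_range' natDegree_lt]
  simp only [Polynomial.coeff_map]

end UnitExtension

theorem sub_two_le_of_sub_one_dvd_succ {q j : ℕ} (h : q - 1 ∣ j + 1) : q - 2 ≤ j := by
  have := Nat.le_of_dvd j.succ_pos h
  omega

section FiniteField

variable {σ τ K : Type*} [Field K] [Fintype K]

theorem one_sub_pow_card_sub_one_ne_zero_iff (t : K) :
    1 - t ^ (Fintype.card K - 1) ≠ 0 ↔ t = 0 := by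
  have card_sub_one_ne_zero : Fintype.card K - 1 ≠ 0 :=
    Nat.sub_ne_zero_of_lt Fintype.one_lt_card
  by_cases ht : t = 0
  · simp [ht, card_sub_one_ne_zero]
  · simp [ht, FiniteField.pow_card_sub_one_eq_one t ht]

-- The form is the homogenization of the indicator function `∏ i, (1 - (tᵢ - aᵢ) ^ (q - 1))` of an
-- affine point, with `e` as the homogenizing coordinate.
theorem separatedByForms_card_mul [Fintype σ] {A : Set (σ → K)} (e : σ)
    (hA : ∀ a ∈ A, a e ≠ 0) :
    SeparatedByForms A (Fintype.card σ * (Fintype.card K - 1)) := by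
  intro a ha
  let F (i : σ) : MvPolynomial σ K :=
    X e ^ (Fintype.card K - 1) - (C (a e) * X i - C (a i) * X e) ^ (Fintype.card K - 1)
  have eval_F_ne_zero_iff (b : σ → K) (hb : b ∈ A) (i : σ) :
      eval b (F i) ≠ 0 ↔ a e * b i = a i * b e := by
    simp [F, FiniteField.pow_card_sub_one_eq_one _ (hA b hb),
      one_sub_pow_card_sub_one_ne_zero_iff, sub_eq_zero, -ne_eq]
  refine ⟨∏ i, F i, ?_, ?_, fun b hb hFb ↦ ?_⟩
  · rw [← Finset.card_univ, ← smul_eq_mul, ← Finset.sum_const]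
    refine IsHomogeneous.prod _ _ _ fun i _ ↦ ?_
    have hom_pow := ((isHomogeneous_C_mul_X (a e) i).sub (isHomogeneous_C_mul_X (a i) e)).pow
      (Fintype.card K - 1)
    rw [one_mul] at hom_pow
    exact (isHomogeneous_X_pow e _).sub hom_pow
  · rw [map_prod, Finset.prod_ne_zero_iff]
    exact fun i _ ↦ (eval_F_ne_zero_iff a ha i).2 (mul_comm _ _)
  · rw [map_prod, Finset.prod_ne_zero_iff] at hFb
    refine ⟨Units.mk0 (b e) (hA b hb) / Units.mk0 (a e) (hA a ha), funext fun i ↦ ?_⟩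
    have cross_mul := (eval_F_ne_zero_iff b hb i).1 (hFb i (Finset.mem_univ i))
    have := hA a ha
    simp only [Pi.smul_apply, Units.smul_def, Units.val_div_eq_div_val, Units.val_mk0, smul_eq_mul]
    field_simp
    linear_combination -cross_mul

theorem exists_isHomogeneous_separating_ratio {a : σ → K} {i j : σ} (hi : a i ≠ 0)
    (hj : a j ≠ 0) :
    ∃ F : MvPolynomial σ K, F.IsHomogeneous (Fintype.card K - 2) ∧ eval a F ≠ 0 ∧
      ∀ b : σ → K, b i ≠ 0 → b j ≠ 0 → eval b F ≠ 0 → b i / b j = a i / a j := by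
  classical
  let u₀ : Kˣ := Units.mk0 (a i) hi / Units.mk0 (a j) hj
  have eval_ne_zero_iff (b : σ → K) :
      eval b (∏ u ∈ Finset.univ.erase u₀, (X i - C (u : K) * X j)) ≠ 0 ↔
        ∀ u ≠ u₀, b i ≠ u * b j := by
    simp [Finset.prod_eq_zero_iff, sub_eq_zero]
  refine ⟨∏ u ∈ Finset.univ.erase u₀, (X i - C (u : K) * X j), ?_, ?_, fun b hbi hbj hFb ↦ ?_⟩
  · have card_erase : (Finset.univ.erase u₀).card = Fintype.card K - 2 := by
      rw [Finset.card_erase_of_mem (Finset.mem_univ _), Finset.card_univ, Fintype.card_units,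
        Nat.sub_sub]
    rw [← card_erase, ← Nat.mul_one (Finset.card _), ← smul_eq_mul, ← Finset.sum_const]
    exact IsHomogeneous.prod _ _ _ fun u _ ↦
      (isHomogeneous_X K i).sub (isHomogeneous_C_mul_X _ j)
  · refine (eval_ne_zero_iff a).2 fun u hu hau ↦ hu (Units.ext ?_)
    simp [u₀, hau]
  · by_contra hne
    refine (eval_ne_zero_iff b).1 hFb (Units.mk0 (b i) hbi / Units.mk0 (b j) hbj) ?_ ?_
    · exact fun h ↦ hne (by simpa [u₀] using congrArg Units.val h)
    · simp [hbj]

theorem SeparatedByForms.unitExtension_add {A : Set (τ → K)} (e : τ) (hA : ∀ a ∈ A, a e ≠ 0) {d : ℕ}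
    (h : SeparatedByForms A d) :
    SeparatedByForms (unitExtension A) (d + (Fintype.card K - 2)) := by
  rintro a ⟨ha_none, ha_some⟩
  obtain ⟨F, hom_F, ne_zero_F, mem_orbit⟩ := h _ ha_some
  obtain ⟨H, hom_H, ne_zero_H, ratio_eq⟩ :=
    exists_isHomogeneous_separating_ratio ha_none (hA _ ha_some)
  refine ⟨rename some F * H, hom_F.rename_isHomogeneous.mul hom_H, ?_, ?_⟩
  · rw [map_mul, eval_rename]
    exact mul_ne_zero ne_zero_F ne_zero_H
  · rintro b ⟨hb_none, hb_some⟩ hb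
    rw [map_mul, eval_rename, mul_ne_zero_iff] at hb
    obtain ⟨c, hc⟩ := mem_orbit _ hb_some hb.1
    have coord_eq (i : τ) : (c : K) * a (some i) = b (some i) := congrFun hc i
    have ratio := ratio_eq b hb_none (hA _ hb_some) hb.2
    refine ⟨c, funext fun o ↦ ?_⟩
    cases o with
    | some i => exact coord_eq i
    | none =>
      have ha_e : a (some e) ≠ 0 := hA _ ha_some
      rw [← coord_eq e, div_eq_div_iff (mul_ne_zero c.ne_zero ha_e) ha_e] at ratio
      refine mul_right_cancel₀ ha_e ?_
      change (c : K) * a none * a (some e) = b none * a (some e)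
      linear_combination -ratio

open Classical in
/-- The function `y ↦ ∑ z, z * F(z, y)`, where `z` runs over the nonzero values of the variable
`none`. It is minus the coefficient of `z⁻¹` in `F(z, y)` modulo `z ^ (q - 1) = 1`. -/
noncomputable def unitResidue (F : MvPolynomial (Option τ) K) (y : τ → K) : K :=
  ∑ z : Kˣ, (z : K) * eval (fun o ↦ o.elim (z : K) y) F

theorem SeparatedByForms.exists_unitResidue_ne_zero {A : Set (τ → K)} {d : ℕ}
    (h : SeparatedByForms (unitExtension A) d) {y : τ → K} (hy : y ∈ A) {e : τ} (he : y e ≠ 0) :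
    ∃ F : MvPolynomial (Option τ) K, F.IsHomogeneous d ∧ unitResidue F y ≠ 0 ∧
      ∀ y' ∈ A, unitResidue F y' ≠ 0 → y' ∈ MulAction.orbit Kˣ y := by
  obtain ⟨F, hom, ne_zero, mem_orbit⟩ := h _ (elim_mem_unitExtension hy 1)
  have exists_scalar (y' : τ → K) (hy' : y' ∈ A) (z : Kˣ)
      (hz : eval (fun o ↦ o.elim (z : K) y') F ≠ 0) : z • y = y' := by
    obtain ⟨c, hc⟩ := mem_orbit _ (elim_mem_unitExtension hy' z) hz
    have c_eq : c = z := Units.ext (by simpa [Units.smul_def] using congrFun hc none)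
    exact c_eq ▸ funext fun i ↦ congrFun hc (some i)
  refine ⟨F, hom, ?_, fun y' hy' hne ↦ ?_⟩
  · rw [unitResidue, Finset.sum_eq_single 1]
    · simpa using ne_zero
    · intro z _ hz
      by_contra hne
      have z_mul : (z : K) * y e = y e :=
        congrFun (exists_scalar y hy z (right_ne_zero_of_mul hne)) e
      exact hz (Units.ext (mul_eq_right₀ he |>.1 z_mul))
    · simp
  · obtain ⟨z, -, hz⟩ := Finset.exists_ne_zero_of_sum_ne_zero hne
    exact ⟨z, exists_scalar y' hy' z (right_ne_zero_of_mul hz)⟩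

theorem unitResidue_eq_neg_sum {F : MvPolynomial (Option τ) K} {d : ℕ} (hF : F.IsHomogeneous d)
    (y : τ → K) :
    unitResidue F y = -∑ j ∈ Finset.range (d + 1) with Fintype.card K - 1 ∣ j + 1,
      eval y ((optionEquivLeft K τ F).coeff j) := by
  classical
  have sum_units (j : ℕ) : ∑ z : Kˣ, (z : K) ^ (j + 1) =
      if Fintype.card K - 1 ∣ j + 1 then -1 else 0 := FiniteField.sum_pow_units K (j + 1)
  calc unitResidue F y
    _ = ∑ z : Kˣ, ∑ j ∈ Finset.range (d + 1),
          eval y ((optionEquivLeft K τ F).coeff j) * (z : K) ^ (j + 1) := by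
      simp only [unitResidue, eval_elim_eq_sum_range hF, Finset.mul_sum, pow_succ]
      exact Finset.sum_congr rfl fun z _ ↦ Finset.sum_congr rfl fun j _ ↦ by ring
    _ = ∑ j ∈ Finset.range (d + 1), eval y ((optionEquivLeft K τ F).coeff j) *
          ∑ z : Kˣ, (z : K) ^ (j + 1) := by
      rw [Finset.sum_comm]
      simp only [Finset.mul_sum]
    _ = _ := by
      simp only [sum_units, Finset.sum_filter, ← Finset.sum_neg_distrib]
      exact Finset.sum_congr rfl fun j _ ↦ by split_ifs <;> ring

theorem pow_sub_card_sub_two_eq_one {j : ℕ} (hj : Fintype.card K - 1 ∣ j + 1) {t : K}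
    (ht : t ≠ 0) : t ^ (j - (Fintype.card K - 2)) = 1 := by
  have one_lt_card : 1 < Fintype.card K := Fintype.one_lt_card
  have sub_eq : j - (Fintype.card K - 2) = j + 1 - (Fintype.card K - 1) := by omega
  obtain ⟨k, hk⟩ := Nat.dvd_sub hj dvd_rfl
  rw [sub_eq, hk, pow_mul, FiniteField.pow_card_sub_one_eq_one t ht, one_pow]

theorem card_sub_two_le_of_unitResidue_ne_zero {F : MvPolynomial (Option τ) K} {d : ℕ}
    (hF : F.IsHomogeneous d) {y : τ → K} (hy : unitResidue F y ≠ 0) :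
    Fintype.card K - 2 ≤ d := by
  rw [unitResidue_eq_neg_sum hF, neg_ne_zero] at hy
  obtain ⟨j, hj, -⟩ := Finset.exists_ne_zero_of_sum_ne_zero hy
  rw [Finset.mem_filter, Finset.mem_range_succ_iff] at hj
  exact (sub_two_le_of_sub_one_dvd_succ hj.2).trans hj.1

theorem exists_isHomogeneous_eval_eq_unitResidue [Finite τ] (e : τ)
    {F : MvPolynomial (Option τ) K} {d : ℕ} (hF : F.IsHomogeneous (d + (Fintype.card K - 2))) :
    ∃ F' : MvPolynomial τ K, F'.IsHomogeneous d ∧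
      ∀ y : τ → K, y e ≠ 0 → eval y F' = unitResidue F y := by
  refine ⟨-∑ j ∈ Finset.range (d + (Fintype.card K - 2) + 1) with Fintype.card K - 1 ∣ j + 1,
    (optionEquivLeft K τ F).coeff j * X e ^ (j - (Fintype.card K - 2)), ?_, fun y hy ↦ ?_⟩
  · refine (IsHomogeneous.sum _ _ _ fun j hj ↦ ?_).neg
    obtain ⟨j_le, dvd_j⟩ : j ≤ d + (Fintype.card K - 2) ∧ Fintype.card K - 1 ∣ j + 1 := by
      rwa [Finset.mem_filter, Finset.mem_range_succ_iff] at hj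
    have le_j : Fintype.card K - 2 ≤ j := sub_two_le_of_sub_one_dvd_succ dvd_j
    have hom_coeff : ((optionEquivLeft K τ F).coeff j).IsHomogeneous
        (d + (Fintype.card K - 2) - j) :=
      IsHomogeneous.coeff_isHomogeneous_of_optionEquivLeft_symm
        (by rwa [AlgEquiv.symm_apply_apply]) j _ (Nat.add_sub_cancel' j_le)
    have degree_eq :
        d + (Fintype.card K - 2) - j + (j - (Fintype.card K - 2)) = d := by omega
    exact degree_eq ▸ hom_coeff.mul (isHomogeneous_X_pow e (j - (Fintype.card K - 2)))
  · rw [unitResidue_eq_neg_sum hF, map_neg, map_sum]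
    refine congrArg _ (Finset.sum_congr rfl fun j hj ↦ ?_)
    rw [map_mul, map_pow, eval_X, pow_sub_card_sub_two_eq_one (Finset.mem_filter.1 hj).2 hy,
      mul_one]

theorem SeparatedByForms.card_sub_two_le_of_unitExtension {A : Set (τ → K)} {y : τ → K}
    (hy : y ∈ A) {e : τ} (he : y e ≠ 0) {d : ℕ} (h : SeparatedByForms (unitExtension A) d) :
    Fintype.card K - 2 ≤ d := by
  obtain ⟨F, hom, ne_zero, -⟩ := h.exists_unitResidue_ne_zero hy he
  exact card_sub_two_le_of_unitResidue_ne_zero hom ne_zero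

theorem separatedByForms_unitExtension_iff [Finite τ] {A : Set (τ → K)} (e : τ)
    (hA : ∀ a ∈ A, a e ≠ 0) (d : ℕ) :
    SeparatedByForms (unitExtension A) (d + (Fintype.card K - 2)) ↔ SeparatedByForms A d := by
  refine ⟨fun h y hy ↦ ?_, fun h ↦ h.unitExtension_add e hA⟩
  obtain ⟨F, hom_F, ne_zero, mem_orbit⟩ := h.exists_unitResidue_ne_zero hy (hA y hy)
  obtain ⟨F', hom_F', eval_eq⟩ := exists_isHomogeneous_eval_eq_unitResidue e hom_F
  refine ⟨F', hom_F', by rwa [eval_eq y (hA y hy)], fun y' hy' hne ↦ mem_orbit y' hy' ?_⟩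
  rwa [← eval_eq y' (hA y' hy')]

theorem separationDegree_unitExtension [Finite τ] {A : Set (τ → K)} (hA_nonempty : A.Nonempty)
    (e : τ) (hA : ∀ a ∈ A, a e ≠ 0) :
    separationDegree (unitExtension A) = separationDegree A + (Fintype.card K - 2) := by
  have := Fintype.ofFinite τ
  obtain ⟨y, hy⟩ := hA_nonempty
  have exists_degree : {d | SeparatedByForms (unitExtension A) d}.Nonempty :=
    ⟨_, separatedByForms_card_mul none fun a ha ↦ ha.1⟩
  have le_separationDegree : Fintype.card K - 2 ≤ separationDegree (unitExtension A) :=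
    le_csInf exists_degree fun d hd ↦
      SeparatedByForms.card_sub_two_le_of_unitExtension hy (hA y hy) hd
  rw [separationDegree, ← Nat.sInf_add le_separationDegree]
  simp only [separatedByForms_unitExtension_iff e hA, separationDegree]

end FiniteField

namespace Multigraph

section Regularity

variable {V E : Type} {K : Type} [Field K] (G : Multigraph V E)

theorem point_apply_ne_zero (x : V → Kˣ) (e : E) : G.point K x e ≠ 0 :=
  mul_ne_zero (x _).ne_zero (x _).ne_zero

theorem mem_vanishingIdeal_iff_of_isHomogeneous_s5 {F : MvPolynomial E K} {d : ℕ}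
    (hF : F.IsHomogeneous d) :
    F ∈ G.vanishingIdeal K ↔ ∀ x, eval (G.point K x) F = 0 := by
  have component_eq (n : ℕ) : homogeneousComponent n F = if n = d then F else 0 :=
    homogeneousComponent_of_mem ((mem_homogeneousSubmodule d F).2 hF)
  change (∀ x n, eval (G.point K x) (homogeneousComponent n F) = 0) ↔ _
  refine forall_congr' fun x ↦ ⟨fun h ↦ by simpa [component_eq] using h d, fun h n ↦ ?_⟩
  rw [component_eq]
  split_ifs <;> simp [h]

theorem exists_isOrbitTransversal_range_point :
    ∃ r : G.toricSet K → E → K, IsOrbitTransversal (Set.range (G.point K)) r := by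
  choose x hx using fun O : G.toricSet K ↦ O.2
  have orbit_eq (O : G.toricSet K) : MulAction.orbit Kˣ (G.point K (x O)) = O := hx O
  refine ⟨fun O ↦ G.point K (x O), fun O ↦ ⟨x O, rfl⟩, ?_, fun O P hP ↦ ?_⟩
  · rintro _ ⟨y, rfl⟩
    exact ⟨⟨_, y, rfl⟩, orbit_eq ⟨_, y, rfl⟩ ▸ MulAction.mem_orbit_self _⟩
  · rw [← MulAction.orbit_eq_iff, orbit_eq, orbit_eq] at hP
    exact Subtype.ext hP

theorem hilbert_eq_finrank_range_evalForms {ι : Type} {r : ι → E → K}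
    (hr : IsOrbitTransversal (Set.range (G.point K)) r) (d : ℕ) :
    G.hilbert K d = Module.finrank K (LinearMap.range (evalForms r d)) := by
  let quotientMap := (Ideal.Quotient.mkₐ K (G.vanishingIdeal K)).toLinearMap.domRestrict
    (homogeneousSubmodule E K d)
  have ker_eq : LinearMap.ker quotientMap = LinearMap.ker (evalForms r d) := by
    ext F
    have mem_ker_iff : F ∈ LinearMap.ker quotientMap ↔ F.1 ∈ G.vanishingIdeal K :=
      Ideal.Quotient.eq_zero_iff_mem
    rw [mem_ker_iff, G.mem_vanishingIdeal_iff_of_isHomogeneous_s5 F.2, LinearMap.mem_ker, funext_iff]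
    simp only [evalForms_apply, Pi.zero_apply]
    constructor
    · intro h i
      obtain ⟨x, hx⟩ := hr.mem i
      rw [← hx, h]
    · intro h x
      obtain ⟨i, hi⟩ := hr.exists_mem_orbit _ ⟨x, rfl⟩
      exact not_not.1 fun hne ↦ (eval_ne_zero_iff_of_mem_orbit F.2 hi).1 hne (h i)
  calc G.hilbert K d
    _ = Module.finrank K (LinearMap.range quotientMap) := by
      rw [LinearMap.range_domRestrict]
      rfl
    _ = _ := by
      rw [← quotientMap.quotKerEquivRange.finrank_eq, ker_eq,
        (evalForms r d).quotKerEquivRange.finrank_eq]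

variable [Finite E]

theorem hilbert_eq_ncard_toricSet_iff_s5 [Finite K] (d : ℕ) :
    G.hilbert K d = (G.toricSet K).ncard ↔ SeparatedByForms (Set.range (G.point K)) d := by
  have toricSet_finite : (G.toricSet K).Finite := by
    rw [toricSet, Set.range_comp' (MulAction.orbit Kˣ)]
    exact (Set.toFinite _).image _
  have := toricSet_finite.fintype
  obtain ⟨r, hr⟩ := G.exists_isOrbitTransversal_range_point (K := K)
  have finrank_eq : (G.toricSet K).ncard = Module.finrank K (G.toricSet K → K) := by
    rw [Module.finrank_fintype_fun_eq_card, Set.fintypeCard_eq_ncard]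
  rw [G.hilbert_eq_finrank_range_evalForms hr, finrank_eq,
    ← hr.evalForms_surjective_iff_separatedByForms, ← LinearMap.range_eq_top]
  exact ⟨Submodule.eq_top_of_finrank_eq, fun h ↦ by rw [h, finrank_top]⟩

theorem reg_eq_separationDegree [Finite K] :
    G.reg K = separationDegree (Set.range (G.point K)) := by
  simp only [reg, separationDegree, hilbert_eq_ncard_toricSet_iff_s5]

end Regularity

section DegreeOne

variable {V E : Type} {G : Multigraph V E} {v : V} {e₀ : E}

theorem exists_incident_iff_eq_of_degree_eq_one (hv : G.degree v = 1) :
    ∃ e₀, ∀ e, G.Incident v e ↔ e = e₀ := by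
  obtain ⟨e₀, he₀⟩ := Nat.card_eq_one_iff_exists.1 hv
  exact ⟨e₀, fun e ↦ ⟨fun he ↦ congrArg Subtype.val (he₀ ⟨e, he⟩), fun he ↦ he ▸ e₀.2⟩⟩

theorem Incident.exists_point_apply_eq (he : G.Incident v e₀) (K : Type) [Field K] :
    ∃ w ≠ v, ∀ x : V → Kˣ, G.point K x e₀ = x v * x w := by
  rcases he with rfl | rfl
  · exact ⟨G.snd e₀, (G.ne e₀).symm, fun x ↦ rfl⟩
  · exact ⟨G.fst e₀, G.ne e₀, fun x ↦ mul_comm _ _⟩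

open Classical in
/-- The edges of `G` are those of `G - v` and the only edge `e₀` at `v`, which corresponds
to `none`. -/
noncomputable def optionEdgeEquiv (he₀ : ∀ e, G.Incident v e ↔ e = e₀) :
    Option {e // ¬ G.Incident v e} ≃ E :=
  (Equiv.subtypeEquivRight fun e ↦ (he₀ e).not).optionCongr.trans (Equiv.optionSubtypeNe e₀)

theorem range_point_eq_preimage_unitExtension (K : Type) [Field K]
    (he₀ : ∀ e, G.Incident v e ↔ e = e₀) :
    Set.range (G.point K) = (· ∘ optionEdgeEquiv he₀) ⁻¹'
      unitExtension (Set.range ((G.deleteVert v).point K)) := by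
  classical
  ext a
  constructor
  · rintro ⟨x, rfl⟩
    exact ⟨G.point_apply_ne_zero x e₀, fun u ↦ x u, rfl⟩
  · rintro ⟨ha, x, hx⟩
    obtain ⟨w, hwv, point_e₀⟩ := ((he₀ e₀).2 rfl).exists_point_apply_eq K
    have a_e₀_ne_zero : a e₀ ≠ 0 := ha
    let z : Kˣ := Units.mk0 (a e₀) a_e₀_ne_zero / x ⟨w, hwv⟩
    let x' (u : V) : Kˣ := if hu : u = v then z else x ⟨u, hu⟩
    have restrict_x' : (fun u : {u // u ≠ v} ↦ x' u) = x := funext fun u ↦ dif_neg u.2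
    refine ⟨x', funext fun e ↦ ?_⟩
    by_cases he : G.Incident v e
    · obtain rfl := (he₀ e).1 he
      simp [point_e₀, x', z, hwv]
    · calc G.point K x' e
        _ = (G.deleteVert v).point K (fun u ↦ x' u) ⟨e, he⟩ := rfl
        _ = a e := by rw [restrict_x']; exact congrFun hx ⟨e, he⟩

end DegreeOne

end Multigraph

theorem reg_deleteVert_degree_one_general {V E : Type} [Finite E] [Nontrivial E]
    (K : Type) [Field K] [Fintype K] (G : Multigraph V E) (v : V) (hv : G.degree v = 1) :
    G.reg K = (G.deleteVert v).reg K + (Fintype.card K - 2) := by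
  obtain ⟨e₀, he₀⟩ := Multigraph.exists_incident_iff_eq_of_degree_eq_one hv
  obtain ⟨e₁, he₁⟩ : ∃ e₁, ¬ G.Incident v e₁ := by simpa only [he₀] using exists_ne e₀
  have point_e₁_ne_zero : ∀ a ∈ Set.range ((G.deleteVert v).point K), a ⟨e₁, he₁⟩ ≠ 0 :=
    Set.forall_mem_range.2 fun x ↦ (G.deleteVert v).point_apply_ne_zero x _
  rw [G.reg_eq_separationDegree, (G.deleteVert v).reg_eq_separationDegree,
    Multigraph.range_point_eq_preimage_unitExtension K he₀, separationDegree_preimage_comp_equiv,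
    separationDegree_unitExtension (Set.range_nonempty _) ⟨e₁, he₁⟩ point_e₁_ne_zero]

/-- **Proposition 2.5.**  Let `v` be a vertex of degree `1` of `G` and assume
`|E_G| > 1`.  If `G' = G - v` has no isolated vertices, then
`reg G = reg G' + (q-2)`, where `q = |K|`. -/
theorem reg_deleteVert_degree_one
    {V E : Type} [Fintype V] [DecidableEq V] [Fintype E] [DecidableEq E]
    (K : Type) [Field K] [Fintype K]
    (G : Multigraph V E) (hG : G.NoIsolated) (v : V)
    (hv : G.degree v = 1) (hE : 1 < Fintype.card E)
    (hG' : (G.deleteVert v).NoIsolated) :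
    G.reg K = (G.deleteVert v).reg K + (Fintype.card K - 2) := by
  have := Fintype.one_lt_card_iff_nontrivial.1 hE
  exact reg_deleteVert_degree_one_general K G v hv
end
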